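/- arXiv:2311.02135 — 4 statements merged into one kernel-verified Lean document; each statement's English description precedes it below -/
import Mathlib

section
/- Let q = p^r ≡ 5 (mod 8) for a prime p, and write q = x^2 + y^2 with integers x, y such that x ≡ 1 (mod 4) and p ∤ x. Let φ and χ_4 be multiplicative characters of F_q of orders 2 and 4 respectively. Then, as an identity of complex numbers, 2^{12} · K_4(G_4(q)) = q(q−1) · [ q^2 + 2q(5x − 21) + 24x^2 − 150x + 241 + 10 · Σ_{a,b ∈ F_q} χ_4(a) · φ(1−a) · φ(b) · φ(b−1) · χ_4^{−1}(a−b) ]. -/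
/-!
Write `χ` for the quartic character, `q` for the order of `F`, `P = J(χ, χ)` and `Q = J(χ³, χ³)`.

As `-1` is not a fourth power, the digraph is asymmetric, so transitive subtournaments of order 4
are the same as ordered quadruples with six prescribed edges (`transK_eq`). Translations and
multiplications by fourth powers act on these, and reduce the count to `q (q - 1) / 4` times the
number `N` of pairs `(u, v)` for which `u, u - 1, v, v - 1, v - u` are all nonzero fourth powers.
Detecting fourth powers by `1 + χ + χ² + χ³` makes `4 ^ 5 * N` the sum of the `4 ^ 5` character sums
`HS χ (a, b, c, d, e) = ∑ χ^a(u) χ^b(u - 1) χ^c(v) χ^d(v - 1) χ^e(v - u)`.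

The pairs `(u, v)` parametrise configurations of five points on the projective line, so the symmetric
group on five letters permutes these sums up to sign (`HS_step`). Modulo this action such a sum
vanishes, or has a trivial exponent and is a product of Jacobi sums (`HS_zero`), or is one of the two
sums `S = HS χ (2, 2, 1, 2, 3)`, which is the hypergeometric sum of the theorem, and
`W = HS χ (2, 2, 2, 2, 2)`; those with all exponents odd cancel in pairs. A finite computation in the
free module on the possible monomials (`total_eq`) gives
`4 ^ 5 * N = 241 - 32 q + 75 (P + Q) + q² - 5 q (P + Q) + 5 (P² + Q²) + 2 P Q + 10 S + W`.

The value `W = (P + Q)² - 2 q` comes from squaring `∑ η(t) η(t² - 1)`, the character sum of the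
curve `y² = t³ - t`, and recognising a 2-isogenous Legendre family (`QuadData.square`).

Finally `P + Q = -2 x` and `P Q = q` (`Quartic.jacobi_sum_prod`). Writing `P = a + b i` one has
`q = a² + b²`; the congruence `(χ(t) - 1) (χ²(1 - t) - 1) ≡ 0` gives `a ≡ 3 (mod 4)`, and reduction to
`F`, where `χ` becomes `z ↦ z ^ ((q - 1) / 4)`, identifies `2 a` with a binomial coefficient
`C(3m, m)` that is prime to `p` by Lucas's theorem. The representation of `q` as a sum of two
squares with first term odd and prime to `p` is unique up to signs, so `a = -x`.
-/

/-- Number of transitive subtournaments of order `m` of the digraph `edge`. -/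
noncomputable def transK {V : Type} [DecidableEq V] (edge : V → V → Prop) (m : ℕ) : ℕ :=
  {s : Finset V | ∃ f : Fin m → V, Function.Injective f ∧ s = Finset.image f Finset.univ ∧
    ∀ i j : Fin m, i < j → edge (f i) (f j)}.ncard

namespace PaleyK4

open Finset
set_option linter.unusedSectionVars false

/-! ### Two-variable character sums and their symmetries -/

section Sums

variable {F : Type} [Field F] [Fintype F] [DecidableEq F]

/-- The two-variable character sum with exponents `t = (a, b, c, d, e)` at
`u, u - 1, v, v - 1, v - u`. The exponents are natural numbers; only their classes mod 4 matter when
`χ ^ 4 = 1`, and `χ ^ 0` is the trivial character, which vanishes at `0`. -/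
noncomputable def HS (χ : MulChar F ℂ) (t : ℕ × ℕ × ℕ × ℕ × ℕ) : ℂ :=
  ∑ u : F, ∑ v : F, (χ ^ t.1) u * (χ ^ t.2.1) (u - 1) * (χ ^ t.2.2.1) v * (χ ^ t.2.2.2.1) (v - 1)
    * (χ ^ t.2.2.2.2) (v - u)

lemma pow_apply_ne (χ : MulChar F ℂ) (k : ℕ) {z : F} (hz : z ≠ 0) : (χ ^ k) z = χ z ^ k :=
  MulChar.pow_apply_coe χ k (Units.mk0 z hz)

lemma apply_pow_four {χ : MulChar F ℂ} (h4 : χ ^ 4 = 1) {z : F} (hz : z ≠ 0) : χ z ^ 4 = 1 := by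
  rw [← pow_apply_ne χ 4 hz, h4, MulChar.one_apply (Ne.isUnit hz)]

lemma apply_inv_eq {χ : MulChar F ℂ} (h4 : χ ^ 4 = 1) {z : F} (hz : z ≠ 0) :
    χ z⁻¹ = χ z ^ 3 := by
  have h1 : χ z * χ z⁻¹ = 1 := by rw [← map_mul, mul_inv_cancel₀ hz, map_one]
  have h2 := apply_pow_four h4 hz
  linear_combination (χ z) ^ 3 * h1 - χ z⁻¹ * h2

lemma pow_mod_four {M : Type*} [Monoid M] {x : M} (h4 : x ^ 4 = 1) (k : ℕ) : x ^ (k % 4) = x ^ k :=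
  (pow_eq_pow_mod k h4).symm

lemma HS_mod {χ : MulChar F ℂ} (h4 : χ ^ 4 = 1) (a b c d e : ℕ) :
    HS χ (a % 4, b % 4, c % 4, d % 4, e % 4) = HS χ (a, b, c, d, e) := by
  simp only [HS, pow_mod_four h4]

/-- Generators of the action of the symmetric group on five letters on exponent vectors: the effect
of `u ↔ v`, of `(u, v) ↦ (1 - u, 1 - v)`, of `(u, v) ↦ (u⁻¹, v⁻¹)` and of `(u, v) ↦ (u / v, 1 / v)`.
The second component is the exponent of the sign that appears. Coefficients `3` stand for `-1`
modulo 4. -/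
def step (g : ℕ) (t : ℕ × ℕ × ℕ × ℕ × ℕ) : (ℕ × ℕ × ℕ × ℕ × ℕ) × ℕ :=
  match t with
  | (a, b, c, d, e) =>
    match g with
    | 0 => ((c, d, a, b, e), e)
    | 1 => ((b, a, d, c, e), a + b + c + d + e)
    | 2 => ((3 * (a + b + e) % 4, b, 3 * (c + d + e) % 4, d, e), b + d + e)
    | _ => ((a, e, 3 * (a + b + c + d + e) % 4, d, b), b + d + e)

lemma apply_neg_one_mul {χ : MulChar F ℂ} (hm : χ (-1) = -1) (z : F) : χ (-z) = - χ z := by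
  rw [neg_eq_neg_one_mul, map_mul, hm]; ring

lemma chpow_neg {χ : MulChar F ℂ} (hm : χ (-1) = -1) (k : ℕ) (z : F) :
    (χ ^ k) (-z) = (-1) ^ k * (χ ^ k) z := by
  rw [neg_eq_neg_one_mul, map_mul, pow_apply_ne χ k (by simp), hm]

lemma chpow_zero (χ : MulChar F ℂ) (k : ℕ) : (χ ^ k) 0 = 0 := MulChar.map_zero _

lemma HS_swap {χ : MulChar F ℂ} (hm : χ (-1) = -1) (a b c d e : ℕ) :
    HS χ (a, b, c, d, e) = (-1) ^ e * HS χ (c, d, a, b, e) := by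
  simp only [HS]
  rw [sum_comm, mul_sum]
  refine sum_congr rfl fun u _ => ?_
  rw [mul_sum]
  refine sum_congr rfl fun v _ => ?_
  rw [← neg_sub v u, chpow_neg hm]
  ring

lemma HS_refl {χ : MulChar F ℂ} (hm : χ (-1) = -1) (a b c d e : ℕ) :
    HS χ (a, b, c, d, e) = (-1) ^ (a + b + c + d + e) * HS χ (b, a, d, c, e) := by
  simp only [HS]
  rw [← Equiv.sum_comp (Equiv.subLeft (1 : F)), mul_sum]
  refine sum_congr rfl fun u _ => ?_
  rw [← Equiv.sum_comp (Equiv.subLeft (1 : F)), mul_sum]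
  refine sum_congr rfl fun v _ => ?_
  simp only [Equiv.subLeft_apply]
  rw [show (1 - v - (1 - u)) = -(v - u) by ring, show 1 - v - 1 = - v by ring,
    show 1 - u - 1 = -u by ring, show 1 - u = -(u - 1) by ring, show 1 - v = -(v - 1) by ring]
  simp only [chpow_neg hm]
  ring

lemma HS_inv {χ : MulChar F ℂ} (h4 : χ ^ 4 = 1) (hm : χ (-1) = -1) (a b c d e : ℕ) :
    HS χ (a, b, c, d, e) = (-1) ^ (b + d + e) *
      HS χ (3 * (a + b + e), b, 3 * (c + d + e), d, e) := by
  simp only [HS]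
  rw [← Equiv.sum_comp (Equiv.inv F), mul_sum]
  refine sum_congr rfl fun u _ => ?_
  rw [← Equiv.sum_comp (Equiv.inv F), mul_sum]
  refine sum_congr rfl fun v _ => ?_
  simp only [Equiv.inv_apply]
  by_cases hu : u = 0
  · subst hu; simp [chpow_zero]
  by_cases hv : v = 0
  · subst hv; simp [chpow_zero]
  rw [show v⁻¹ - u⁻¹ = -((v - u) * (u⁻¹ * v⁻¹)) by field_simp; ring,
    show u⁻¹ - 1 = -((u - 1) * u⁻¹) by field_simp; ring,
    show v⁻¹ - 1 = -((v - 1) * v⁻¹) by field_simp; ring]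
  simp only [chpow_neg hm, map_mul]
  simp only [pow_apply_ne χ _ hu, pow_apply_ne χ _ hv, pow_apply_ne χ _ (inv_ne_zero hu),
    pow_apply_ne χ _ (inv_ne_zero hv), apply_inv_eq h4 hu, apply_inv_eq h4 hv]
  ring

lemma HS_rot {χ : MulChar F ℂ} (h4 : χ ^ 4 = 1) (hm : χ (-1) = -1) (a b c d e : ℕ) :
    HS χ (a, b, c, d, e) = (-1) ^ (b + d + e) *
      HS χ (a, e, 3 * (a + b + c + d + e), d, b) := by
  simp only [HS]
  rw [sum_comm, ← Equiv.sum_comp (Equiv.inv F)]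
  conv_rhs => rw [sum_comm]
  rw [mul_sum]
  refine sum_congr rfl fun v _ => ?_
  simp only [Equiv.inv_apply]
  by_cases hv : v = 0
  · subst hv; simp [chpow_zero]
  rw [← Equiv.sum_comp (Equiv.mulRight₀ v⁻¹ (inv_ne_zero hv)), mul_sum]
  refine sum_congr rfl fun u _ => ?_
  simp only [Equiv.mulRight₀_apply]
  rw [show v⁻¹ - u * v⁻¹ = -((u - 1) * v⁻¹) by ring,
    show u * v⁻¹ - 1 = -((v - u) * v⁻¹) by field_simp; ring,
    show v⁻¹ - 1 = -((v - 1) * v⁻¹) by field_simp; ring]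
  simp only [chpow_neg hm, map_mul]
  simp only [pow_apply_ne χ _ hv, pow_apply_ne χ _ (inv_ne_zero hv), apply_inv_eq h4 hv]
  ring

lemma HS_step {χ : MulChar F ℂ} (h4 : χ ^ 4 = 1) (hm : χ (-1) = -1) (g : ℕ)
    (t : ℕ × ℕ × ℕ × ℕ × ℕ) :
    HS χ t = (-1) ^ (step g t).2 * HS χ (step g t).1 := by
  obtain ⟨a, b, c, d, e⟩ := t
  match g with
  | 0 => exact HS_swap hm ..
  | 1 => exact HS_refl hm ..
  | 2 =>
    rw [HS_inv h4 hm]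
    simp only [step, HS, pow_mod_four h4]
  | n + 3 =>
    rw [HS_rot h4 hm]
    simp only [step, HS, pow_mod_four h4]

/-- If `χ(u)` has a trivial exponent, the sum over `u` is a Jacobi sum up to the missing term
`u = 0`, and the sum over `v` then is one as well. -/
lemma HS_zero {χ : MulChar F ℂ} (hm : χ (-1) = -1) (b c d e : ℕ) :
    HS χ (0, b, c, d, e) =
      (-1) ^ (b + d + e) * jacobiSum (χ ^ b) (χ ^ e) * jacobiSum (χ ^ c) (χ ^ (b + d + e))
      - (-1) ^ (b + d) * jacobiSum (χ ^ (c + e)) (χ ^ d) := by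
  have key : ∀ v : F, (∑ u : F, (χ ^ 0) u * (χ ^ b) (u - 1) * (χ ^ c) v * (χ ^ d) (v - 1)
      * (χ ^ e) (v - u)) = (-1) ^ (b + d + e) * jacobiSum (χ ^ b) (χ ^ e) *
        ((χ ^ c) v * (χ ^ (b + d + e)) (1 - v))
        - (-1) ^ (b + d) * ((χ ^ (c + e)) v * (χ ^ d) (1 - v)) := by
    intro v
    by_cases hv1 : v = 1
    · subst hv1; simp [chpow_zero]
    have hv1' : v - 1 ≠ 0 := sub_ne_zero.2 hv1
    have h1 : ∑ u : F, (χ ^ b) (u - 1) * (χ ^ e) (v - u)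
        = (χ ^ b) (v - 1) * (χ ^ e) (v - 1) * jacobiSum (χ ^ b) (χ ^ e) := by
      rw [jacobiSum, mul_sum, ← Equiv.sum_comp ((Equiv.mulLeft₀ (v - 1) hv1').trans
        (Equiv.addRight (1 : F)))]
      refine sum_congr rfl fun u _ => ?_
      simp only [Equiv.trans_apply, Equiv.mulLeft₀_apply, Equiv.coe_addRight]
      rw [show (v - 1) * u + 1 - 1 = (v - 1) * u by ring,
        show v - ((v - 1) * u + 1) = (v - 1) * (1 - u) by ring, map_mul, map_mul]
      ring
    have h2 : ∑ u : F, (χ ^ 0) u * (χ ^ b) (u - 1) * (χ ^ e) (v - u)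
        = ∑ u : F, (χ ^ b) (u - 1) * (χ ^ e) (v - u) - (χ ^ b) (-1) * (χ ^ e) v := by
      rw [← Finset.add_sum_erase _ _ (mem_univ (0 : F)),
        ← Finset.add_sum_erase univ (fun u => (χ ^ b) (u - 1) * (χ ^ e) (v - u)) (mem_univ (0 : F))]
      simp only [chpow_zero, zero_mul, zero_sub, sub_zero, zero_add, add_sub_cancel_left]
      refine sum_congr rfl fun u hu => ?_
      rw [pow_zero, MulChar.one_apply (Ne.isUnit (ne_of_mem_erase hu)), one_mul]
    have h3 : ∑ u : F, (χ ^ 0) u * (χ ^ b) (u - 1) * (χ ^ c) v * (χ ^ d) (v - 1)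
      * (χ ^ e) (v - u) = (χ ^ c) v * (χ ^ d) (v - 1) *
        ∑ u : F, (χ ^ 0) u * (χ ^ b) (u - 1) * (χ ^ e) (v - u) := by
      rw [mul_sum]
      exact sum_congr rfl fun u _ => by ring
    rw [h3, h2, h1, ← neg_sub 1 v]
    simp only [chpow_neg hm, pow_add χ, MulChar.mul_apply]
    rw [map_one]
    ring
  simp only [HS]
  rw [sum_comm]
  simp only [key]
  rw [sum_sub_distrib, ← mul_sum, ← mul_sum]
  rfl

end Sums

/-! ### Formal evaluation of all the sums -/

section Formal

/-- A formal integral linear combination of `1, q, P, Q`. -/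
@[ext] structure Lin where
  o : ℤ
  q : ℤ
  P : ℤ
  Q : ℤ

/-- A formal integral linear combination of `1, q, P, Q, q², qP, qQ, P², Q², PQ, S, W`. The last two
coordinates stand for the two character sums that are not reduced to Jacobi sums. -/
@[ext] structure Quad where
  o : ℤ
  q : ℤ
  P : ℤ
  Q : ℤ
  qq : ℤ
  qP : ℤ
  qQ : ℤ
  PP : ℤ
  QQ : ℤ
  PQ : ℤ
  S : ℤ
  W : ℤ
  deriving DecidableEq

/-- Specialisation of a formal linear combination. -/
def Lin.eval (x : Lin) (q P Q : ℂ) : ℂ := x.o + x.q * q + x.P * P + x.Q * Q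

/-- Specialisation of a formal quadratic combination. -/
def Quad.eval (x : Quad) (q P Q S W : ℂ) : ℂ :=
  x.o + x.q * q + x.P * P + x.Q * Q + x.qq * q ^ 2 + x.qP * (q * P) + x.qQ * (q * Q)
    + x.PP * P ^ 2 + x.QQ * Q ^ 2 + x.PQ * (P * Q) + x.S * S + x.W * W

/-- Product of two linear combinations. -/
def Lin.mul (x y : Lin) : Quad where
  o := x.o * y.o
  q := x.o * y.q + x.q * y.o
  P := x.o * y.P + x.P * y.o
  Q := x.o * y.Q + x.Q * y.o
  qq := x.q * y.q
  qP := x.q * y.P + x.P * y.q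
  qQ := x.q * y.Q + x.Q * y.q
  PP := x.P * y.P
  QQ := x.Q * y.Q
  PQ := x.P * y.Q + x.Q * y.P
  S := 0
  W := 0

/-- `n • x + m • y` -/
def Quad.comb (n : ℤ) (x : Quad) (m : ℤ) (y : Quad) : Quad where
  o := n * x.o + m * y.o
  q := n * x.q + m * y.q
  P := n * x.P + m * y.P
  Q := n * x.Q + m * y.Q
  qq := n * x.qq + m * y.qq
  qP := n * x.qP + m * y.qP
  qQ := n * x.qQ + m * y.qQ
  PP := n * x.PP + m * y.PP
  QQ := n * x.QQ + m * y.QQ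
  PQ := n * x.PQ + m * y.PQ
  S := n * x.S + m * y.S
  W := n * x.W + m * y.W

lemma Lin.eval_mul (x y : Lin) (q P Q S W : ℂ) :
    (x.mul y).eval q P Q S W = x.eval q P Q * y.eval q P Q := by
  simp only [Lin.mul, Lin.eval, Quad.eval]; push_cast; ring

lemma Quad.eval_comb (n : ℤ) (x : Quad) (m : ℤ) (y : Quad) (q P Q S W : ℂ) :
    (x.comb n m y).eval q P Q S W = n * x.eval q P Q S W + m * y.eval q P Q S W := by
  simp only [Quad.comb, Quad.eval]; push_cast; ring

/-- The formal zero. -/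
def Quad.zero : Quad := ⟨0, 0, 0, 0, 0, 0, 0, 0, 0, 0, 0, 0⟩
/-- The formal symbol `S`. -/
def Quad.varS : Quad := ⟨0, 0, 0, 0, 0, 0, 0, 0, 0, 0, 1, 0⟩
/-- The formal symbol `W`. -/
def Quad.varW : Quad := ⟨0, 0, 0, 0, 0, 0, 0, 0, 0, 0, 0, 1⟩

/-- The sign `(-1) ^ n`, in a form that evaluates quickly in the kernel. -/
def sgn (n : ℕ) : ℤ := if n % 2 = 0 then 1 else -1

lemma sgn_eq (n : ℕ) : ((sgn n : ℤ) : ℂ) = (-1) ^ n := by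
  unfold sgn
  rw [neg_one_pow_eq_pow_mod_two]
  rcases Nat.mod_two_eq_zero_or_one n with h | h <;> simp [h]

/-- The Jacobi sum `J(χ ^ i, χ ^ j)` for `i, j < 4`, in terms of `q`, `P = J(χ, χ)` and
`Q = J(χ³, χ³)`. -/
def jac (i j : ℕ) : Lin :=
  match i, j with
  | 0, 0 => ⟨-2, 1, 0, 0⟩
  | 0, _ => ⟨-1, 0, 0, 0⟩
  | _, 0 => ⟨-1, 0, 0, 0⟩
  | 1, 1 => ⟨0, 0, 1, 0⟩
  | 1, 2 => ⟨0, 0, -1, 0⟩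
  | 2, 1 => ⟨0, 0, -1, 0⟩
  | 2, 2 => ⟨-1, 0, 0, 0⟩
  | 2, 3 => ⟨0, 0, 0, -1⟩
  | 3, 2 => ⟨0, 0, 0, -1⟩
  | 3, 3 => ⟨0, 0, 0, 1⟩
  | _, _ => ⟨1, 0, 0, 0⟩

/-- The formal value of `HS χ (0, b, c, d, e)`, as given by `HS_zero`. -/
def degen (b c d e : ℕ) : Quad :=
  Quad.comb (sgn (b + d + e)) ((jac (b % 4) (e % 4)).mul (jac (c % 4) ((b + d + e) % 4)))
    (- sgn (b + d)) ((jac ((c + e) % 4) (d % 4)).mul ⟨1, 0, 0, 0⟩)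

/-- Apply a word in the generators `step`, adding up the sign exponents. -/
def walk : List ℕ → (ℕ × ℕ × ℕ × ℕ × ℕ) → (ℕ × ℕ × ℕ × ℕ × ℕ) × ℕ
  | [], t => (t, 0)
  | g :: w, t => ((walk w (step g t).1).1, (step g t).2 + (walk w (step g t).1).2)

/-- The formal value of `HS χ t`, if the word `w` exhibits one: `w` may lead from `t` to a vector with
first exponent `0`, back to `t` with a sign `-1` (and the sum vanishes), or to one of the two
irreducible sums. -/
def tryWord (w : List ℕ) (t : ℕ × ℕ × ℕ × ℕ × ℕ) : Option Quad :=
  match walk w t with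
  | ((a, b, c, d, e), s) =>
    if a = 0 then some (Quad.comb (sgn s) (degen b c d e) 0 Quad.zero)
    else if (a, b, c, d, e) = t ∧ s % 2 = 1 then some Quad.zero
    else if (a, b, c, d, e) = (2, 2, 1, 2, 3) then some (Quad.comb (sgn s) Quad.varS 0 Quad.zero)
    else if (a, b, c, d, e) = (2, 2, 2, 2, 2) then some (Quad.comb (sgn s) Quad.varW 0 Quad.zero)
    else none

/-- Group elements sufficient to evaluate every sum that has an even exponent. Nothing depends on
how they were chosen: `tryWord` is sound for every word. -/
def words : List (List ℕ) :=
  [[], [3], [2], [0, 2, 1, 3, 0, 1, 2], [1], [0, 3, 0], [0, 2, 3, 0], [0], [0, 1], [1, 3, 1], [0, 2],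
    [0, 1, 3, 0, 1], [1, 3], [2, 1], [2, 3], [3, 1], [0, 1, 3], [0, 2, 1], [0, 3, 1], [1, 2, 3],
    [2, 1, 3], [2, 3, 1], [3, 0, 1], [0, 1, 2, 3], [0, 1, 3, 1], [0, 2, 1, 3], [0, 2, 3, 1],
    [0, 3, 0, 1], [1, 2, 1, 3], [1, 3, 0, 1], [2, 3, 0, 1], [0, 1, 2, 1, 3], [0, 2, 3, 0, 1]]

/-- The formal value found by the first successful word. -/
def value (t : ℕ × ℕ × ℕ × ℕ × ℕ) : Option Quad := words.findSome? fun w => tryWord w t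

/-- All exponents are odd. -/
def allOdd (a b c d e : ℕ) : Bool := a % 2 = 1 ∧ b % 2 = 1 ∧ c % 2 = 1 ∧ d % 2 = 1 ∧ e % 2 = 1

/-- The sum of `f 0, f 1, f 2, f 3`, if all are defined. -/
def sum4 (f : ℕ → Option Quad) : Option Quad :=
  match f 0, f 1, f 2, f 3 with
  | some a, some b, some c, some d => some ((a.comb 1 1 b).comb 1 1 (c.comb 1 1 d))
  | _, _, _, _ => none

/-- The formal value of the sum of all `HS χ t`, leaving out those with all exponents odd. -/
def total : Option Quad :=
  sum4 fun a => sum4 fun b => sum4 fun c => sum4 fun d => sum4 fun e =>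
    if allOdd a b c d e then some Quad.zero else value (a, b, c, d, e)

lemma total_eq : total = some ⟨241, -32, 75, 75, 1, -5, -5, 5, 5, 2, 10, 1⟩ := by
  decide +kernel

end Formal

/-! ### Soundness of the formal evaluation -/

section Soundness

variable {F : Type} [Field F] [Fintype F] [DecidableEq F]

lemma HS_walk {χ : MulChar F ℂ} (h4 : χ ^ 4 = 1) (hm : χ (-1) = -1) (w : List ℕ) :
    ∀ t : ℕ × ℕ × ℕ × ℕ × ℕ, HS χ t = (-1) ^ (walk w t).2 * HS χ (walk w t).1 := by
  induction w with
  | nil => intro t; simp [walk]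
  | cons g w ih =>
    intro t
    rw [HS_step h4 hm g t, ih (step g t).1]
    simp only [walk]
    ring

/-- The facts about `χ` that make the formal values true: `jac` is the table of its Jacobi sums, and
`S`, `W` are the two remaining sums. -/
structure JacobiData (χ : MulChar F ℂ) (q P Q S W : ℂ) : Prop where
  pow_four : χ ^ 4 = 1
  neg_one : χ (-1) = -1
  jac : ∀ i < 4, ∀ j < 4, jacobiSum (χ ^ i) (χ ^ j) = (jac i j).eval q P Q
  S_eq : HS χ (2, 2, 1, 2, 3) = S
  W_eq : HS χ (2, 2, 2, 2, 2) = W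

variable {χ : MulChar F ℂ} {q P Q S W : ℂ}

lemma JacobiData.degen (h : JacobiData χ q P Q S W) (b c d e : ℕ) :
    HS χ (0, b, c, d, e) = (degen b c d e).eval q P Q S W := by
  have hj : ∀ i j : ℕ, jacobiSum (χ ^ i) (χ ^ j) = (PaleyK4.jac (i % 4) (j % 4)).eval q P Q := by
    intro i j
    rw [← h.jac _ (Nat.mod_lt _ (by norm_num)) _ (Nat.mod_lt _ (by norm_num)),
      pow_mod_four h.pow_four, pow_mod_four h.pow_four]
  rw [HS_zero h.neg_one, hj, hj, hj, PaleyK4.degen, Quad.eval_comb, Lin.eval_mul, Lin.eval_mul]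
  push_cast [sgn_eq]
  simp [Lin.eval]
  ring

lemma JacobiData.tryWord (h : JacobiData χ q P Q S W) {w : List ℕ} {t : ℕ × ℕ × ℕ × ℕ × ℕ}
    {x : Quad} (hx : tryWord w t = some x) : HS χ t = x.eval q P Q S W := by
  have hw := HS_walk h.pow_four h.neg_one w t
  have hz : Quad.zero.eval q P Q S W = 0 := by simp [Quad.zero, Quad.eval]
  unfold PaleyK4.tryWord at hx
  rcases hwt : walk w t with ⟨⟨a, b, c, d, e⟩, s⟩
  rw [hwt] at hx hw
  simp only at hx hw
  split_ifs at hx with h1 h2 h3 h4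
  · obtain rfl := Option.some.inj hx
    rw [hw, h1, h.degen, Quad.eval_comb, sgn_eq]; simp
  · obtain rfl := Option.some.inj hx
    rw [h2.1, neg_one_pow_eq_pow_mod_two, h2.2] at hw
    rw [hz]
    linear_combination hw / 2
  · obtain rfl := Option.some.inj hx
    rw [hw, h3, h.S_eq, Quad.eval_comb, sgn_eq]; simp [Quad.varS, Quad.eval]
  · obtain rfl := Option.some.inj hx
    rw [hw, h4, h.W_eq, Quad.eval_comb, sgn_eq]; simp [Quad.varW, Quad.eval]

lemma JacobiData.value (h : JacobiData χ q P Q S W) {t : ℕ × ℕ × ℕ × ℕ × ℕ}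
    {x : Quad} (hx : value t = some x) : HS χ t = x.eval q P Q S W := by
  obtain ⟨w, -, hw⟩ := List.exists_of_findSome?_eq_some hx
  exact h.tryWord hw

lemma sum4_spec {f : ℕ → Option Quad} {g : ℕ → ℂ}
    (hfg : ∀ n x, f n = some x → g n = x.eval q P Q S W) {x : Quad} (hx : sum4 f = some x) :
    ∑ n ∈ range 4, g n = x.eval q P Q S W := by
  unfold sum4 at hx
  split at hx
  · rename_i a b c d ha hb hc hd
    obtain rfl := Option.some.inj hx
    simp only [sum_range_succ, sum_range_zero, hfg _ _ ha, hfg _ _ hb, hfg _ _ hc, hfg _ _ hd,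
      Quad.eval_comb]
    push_cast
    ring
  · simp at hx

/-- Exchanging `u` and `v` changes the sign of the sums with all exponents odd. -/
lemma sum_allOdd (hm : χ (-1) = -1) :
    ∑ a ∈ range 4, ∑ b ∈ range 4, ∑ c ∈ range 4, ∑ d ∈ range 4, ∑ e ∈ range 4,
      (if allOdd a b c d e then HS χ (a, b, c, d, e) else 0) = 0 := by
  have h : ∀ a b c d e : ℕ, (if allOdd a b c d e then HS χ (a, b, c, d, e) else 0)
      = - (if allOdd c d a b e then HS χ (c, d, a, b, e) else 0) := by
    intro a b c d e
    have h1 : allOdd a b c d e = allOdd c d a b e := by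
      simp only [allOdd, decide_eq_decide]; tauto
    rw [h1]
    by_cases ho : allOdd c d a b e = true
    · rw [if_pos ho, if_pos ho, HS_swap hm]
      have : Odd e := by
        simp only [allOdd, decide_eq_true_eq] at ho
        exact Nat.odd_iff.2 ho.2.2.2.2
      rw [this.neg_one_pow]; ring
    · rw [if_neg ho, if_neg ho, neg_zero]
  set O : ℕ → ℕ → ℕ → ℕ → ℕ → ℂ :=
    fun a b c d e => (if allOdd a b c d e then HS χ (a, b, c, d, e) else 0) with hO
  have h2 : ∑ a ∈ range 4, ∑ b ∈ range 4, ∑ c ∈ range 4, ∑ d ∈ range 4, ∑ e ∈ range 4,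
      O a b c d e = - ∑ a ∈ range 4, ∑ b ∈ range 4, ∑ c ∈ range 4, ∑ d ∈ range 4,
        ∑ e ∈ range 4, O a b c d e := by
    have h3 : ∀ f : ℕ → ℕ → ℕ → ℕ → ℂ, ∑ a ∈ range 4, ∑ b ∈ range 4, ∑ c ∈ range 4,
        ∑ d ∈ range 4, f a b c d = ∑ a ∈ range 4, ∑ b ∈ range 4, ∑ c ∈ range 4,
        ∑ d ∈ range 4, f c d a b := by
      intro f
      calc _ = ∑ a ∈ range 4, ∑ c ∈ range 4, ∑ b ∈ range 4, ∑ d ∈ range 4, f a b c d :=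
            sum_congr rfl fun a _ => sum_comm
        _ = ∑ c ∈ range 4, ∑ a ∈ range 4, ∑ b ∈ range 4, ∑ d ∈ range 4, f a b c d := sum_comm
        _ = ∑ c ∈ range 4, ∑ a ∈ range 4, ∑ d ∈ range 4, ∑ b ∈ range 4, f a b c d :=
            sum_congr rfl fun c _ => sum_congr rfl fun a _ => sum_comm
        _ = _ := sum_congr rfl fun c _ => sum_comm
    refine (h3 fun a b c d => ∑ e ∈ range 4, O a b c d e).trans ?_
    simp only [← sum_neg_distrib]
    exact sum_congr rfl fun a _ => sum_congr rfl fun b _ => sum_congr rfl fun c _ =>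
      sum_congr rfl fun d _ => sum_congr rfl fun e _ => h c d a b e
  linear_combination h2 / 2

lemma JacobiData.total (h : JacobiData χ q P Q S W) :
    ∑ a ∈ range 4, ∑ b ∈ range 4, ∑ c ∈ range 4, ∑ d ∈ range 4, ∑ e ∈ range 4,
      HS χ (a, b, c, d, e) =
    (Quad.mk 241 (-32) 75 75 1 (-5) (-5) 5 5 2 10 1).eval q P Q S W := by
  have h0 := sum_allOdd h.neg_one
  have h1 : ∑ a ∈ range 4, ∑ b ∈ range 4, ∑ c ∈ range 4, ∑ d ∈ range 4, ∑ e ∈ range 4,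
      (if allOdd a b c d e then 0 else HS χ (a, b, c, d, e)) =
      (Quad.mk 241 (-32) 75 75 1 (-5) (-5) 5 5 2 10 1).eval q P Q S W := by
    refine sum4_spec (fun a x hx => ?_) total_eq
    refine sum4_spec (fun b x hx => ?_) hx
    refine sum4_spec (fun c x hx => ?_) hx
    refine sum4_spec (fun d x hx => ?_) hx
    refine sum4_spec (fun e x hx => ?_) hx
    split_ifs at hx ⊢
    · obtain rfl := Option.some.inj hx
      simp [Quad.zero, Quad.eval]
    · exact h.value hx
  refine Eq.trans ?_ h1
  rw [← sub_eq_zero]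
  refine Eq.trans ?_ h0
  simp only [← sum_sub_distrib]
  refine sum_congr rfl fun a _ => sum_congr rfl fun b _ => sum_congr rfl fun c _ =>
      sum_congr rfl fun d _ => sum_congr rfl fun e _ => ?_
  split_ifs <;> simp

end Soundness

/-! ### The sum with all exponents quadratic -/

section Quadratic

variable {F : Type} [Field F] [Fintype F] [DecidableEq F]

/-- The properties of the quadratic character `η` of a finite field in which `-1` is a square that
suffice for computing its character sums; `sum_sq` counts square roots. -/
structure QuadData (η : MulChar F ℂ) : Prop where
  two_ne : (2 : F) ≠ 0
  neg_one : η (-1) = 1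
  sq_one : ∀ z : F, z ≠ 0 → η z ^ 2 = 1
  sum_zero : ∑ z : F, η z = 0
  sum_sq : ∀ h : F → ℂ, ∑ d : F, h (d ^ 2) = ∑ w : F, (1 + η w) * h w

variable {η : MulChar F ℂ}

lemma QuadData.neg (hη : QuadData η) (z : F) : η (-z) = η z := by
  rw [neg_eq_neg_one_mul, map_mul, hη.neg_one, one_mul]

lemma QuadData.four (hη : QuadData η) : η 4 = 1 := by
  rw [show (4 : F) = 2 * 2 by norm_num, map_mul, ← sq, hη.sq_one _ hη.two_ne]

lemma QuadData.sum_shift (hη : QuadData η) (a : F) : ∑ z : F, η (z + a) = 0 :=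
  (Equiv.sum_comp (Equiv.addRight a) η).trans hη.sum_zero

/-- The character sum of a product of two linear polynomials. -/
lemma QuadData.conic (hη : QuadData η) (a b : F) :
    ∑ n : F, η (n - a) * η (b - n) = -1 + if a = b then (Fintype.card F : ℂ) else 0 := by
  rw [← Equiv.sum_comp (Equiv.addRight a)]
  simp only [Equiv.coe_addRight, add_sub_cancel_right]
  split_ifs with hab
  · subst hab
    have h : ∀ x : F, η x * η (a - (x + a)) = 1 - if x = 0 then 1 else 0 := by
      intro x
      rw [show a - (x + a) = - x by ring, hη.neg, ← sq]
      split_ifs with hx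
      · simp [hx, MulChar.map_zero η]
      · rw [hη.sq_one x hx]; ring
    simp only [h]; simp; ring
  · have hc : b - a ≠ 0 := sub_ne_zero.2 (Ne.symm hab)
    -- substitute `x = 1 / t`
    have h : ∀ x : F, η x⁻¹ * η (b - (x⁻¹ + a)) = η ((b - a) * x - 1) - if x = 0 then 1 else 0 := by
      intro x
      split_ifs with hx
      · simp [hx, hη.neg_one, MulChar.map_zero η]
      · rw [sub_zero, ← map_mul, ← one_mul (η (_ * _)), ← hη.sq_one x hx, ← map_pow, ← map_mul]
        congr 1; field_simp; ring
    rw [← Equiv.sum_comp (Equiv.inv F)]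
    simp only [Equiv.inv_apply, h]
    rw [sum_sub_distrib, ← Equiv.sum_comp ((Equiv.addRight (1 : F)).trans
      (Equiv.mulLeft₀ (b - a)⁻¹ (inv_ne_zero hc)))]
    have h2 : ∀ x : F, η ((b - a) * ((b - a)⁻¹ * (x + 1)) - 1) = η x := by
      intro x; congr 1; field_simp; ring
    simp [h2, hη.sum_zero]

/-- The number of roots of a quadratic polynomial, through its discriminant. -/
lemma QuadData.count (hη : QuadData η) (s : F) :
    ∑ p : F, (if p ^ 2 - s * p + 1 = 0 then (1 : ℂ) else 0) = 1 + η (s ^ 2 - 4) := by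
  have h2 := hη.two_ne
  rw [← Equiv.sum_comp ((Equiv.addRight s).trans (Equiv.mulLeft₀ (2 : F)⁻¹ (inv_ne_zero h2)))]
  have h : ∀ d : F, (if (2⁻¹ * (d + s)) ^ 2 - s * (2⁻¹ * (d + s)) + 1 = 0 then (1 : ℂ) else 0)
      = if d ^ 2 = s ^ 2 - 4 then 1 else 0 := by
    intro d
    congr 1
    have : (2⁻¹ * (d + s)) ^ 2 - s * (2⁻¹ * (d + s)) + 1 = (d ^ 2 - (s ^ 2 - 4)) / 4 := by
      have h4 : (4 : F) ≠ 0 := by rw [show (4 : F) = 2 * 2 by norm_num]; exact mul_ne_zero h2 h2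
      field_simp; ring
    rw [this, div_eq_zero_iff, sub_eq_zero]
    have h4 : (4 : F) ≠ 0 := by rw [show (4 : F) = 2 * 2 by norm_num]; exact mul_ne_zero h2 h2
    simp [h4]
  simp only [Equiv.trans_apply, Equiv.coe_addRight, Equiv.mulLeft₀_apply, h]
  rw [hη.sum_sq (fun w => if w = s ^ 2 - 4 then 1 else 0)]
  simp

/-- The substitution `s = p + 1 / p`, a 2-isogeny: the family on the left has the character sums of
the Legendre family. -/
lemma QuadData.isogeny (hη : QuadData η) (z : F) :
    ∑ p : F, η p * η ((p + 1) ^ 2 - 4 * p * z) = ∑ y : F, η y * η (y - 1) * η (y - z) := by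
  have h2 := hη.two_ne
  have h4 : (4 : F) ≠ 0 := by rw [show (4 : F) = 2 * 2 by norm_num]; exact mul_ne_zero h2 h2
  have h : ∀ p : F, η p * η ((p + 1) ^ 2 - 4 * p * z) =
      ∑ s : F, (if p ^ 2 - s * p + 1 = 0 then (1 : ℂ) else 0) * η (s + (2 - 4 * z)) := by
    intro p
    by_cases hp : p = 0
    · subst hp; simp [MulChar.map_zero η]
    · have : ∀ s : F, p ^ 2 - s * p + 1 = 0 ↔ s = p + p⁻¹ := by
        intro s
        constructor
        · intro h; field_simp; linear_combination -h
        · rintro rfl; field_simp; ring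
      simp only [this, ite_mul, one_mul, zero_mul, sum_ite_eq', mem_univ, if_true]
      rw [← map_mul, ← one_mul (η (p + _ + _)), ← hη.sq_one p hp, ← map_pow, ← map_mul]
      congr 1; field_simp; ring
  simp only [h]
  rw [sum_comm]
  simp only [← sum_mul, hη.count]
  simp only [add_mul, one_mul, sum_add_distrib, hη.sum_shift, zero_add]
  rw [← Equiv.sum_comp ((Equiv.mulLeft₀ (4 : F) h4).trans (Equiv.subRight 2))]
  refine sum_congr rfl fun y _ => ?_
  simp only [Equiv.trans_apply, Equiv.mulLeft₀_apply, Equiv.subRight_apply]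
  rw [show (4 * y - 2) ^ 2 - 4 = 4 * 4 * (y * (y - 1)) by ring,
    show 4 * y - 2 + (2 - 4 * z) = 4 * (y - z) by ring]
  simp only [map_mul, hη.four]
  ring

/-- The square of the character sum of `y² = t³ - t`: parametrising pairs `(t, t')` by
`m = t + t'` and `p = t t'` turns it into a sum over the Legendre family. -/
lemma QuadData.square (hη : QuadData η) :
    (∑ t : F, η t * η (t ^ 2 - 1)) ^ 2 =
      2 * Fintype.card F + ∑ z : F, ∑ y : F, η z * η (z - 1) * η y * η (y - 1) * η (y - z) := by
  have h2 := hη.two_ne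
  have h4 : (4 : F) ≠ 0 := by rw [show (4 : F) = 2 * 2 by norm_num]; exact mul_ne_zero h2 h2
  have e1 : (∑ t : F, η t * η (t ^ 2 - 1)) ^ 2 = ∑ m : F, ∑ t : F,
      η (t * (m - t)) * η ((t * (m - t) + 1) ^ 2 - m ^ 2) := by
    rw [sq, sum_mul_sum]
    conv_rhs => rw [sum_comm]
    refine sum_congr rfl fun t _ => ?_
    rw [← Equiv.sum_comp (Equiv.subRight t)]
    refine sum_congr rfl fun m _ => ?_
    simp only [Equiv.subRight_apply, ← map_mul]
    congr 1; ring
  have e2 : ∀ m : F, ∑ t : F, η (t * (m - t)) * η ((t * (m - t) + 1) ^ 2 - m ^ 2) =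
      ∑ p : F, (1 + η (m ^ 2 - 4 * p)) * (η p * η ((p + 1) ^ 2 - m ^ 2)) := by
    intro m
    rw [← Equiv.sum_comp ((Equiv.addRight m).trans (Equiv.mulLeft₀ (2 : F)⁻¹ (inv_ne_zero h2)))]
    have : ∀ d : F, (2⁻¹ * (d + m)) * (m - 2⁻¹ * (d + m)) = (m ^ 2 - d ^ 2) / 4 := by
      intro d; field_simp; ring
    simp only [Equiv.trans_apply, Equiv.coe_addRight, Equiv.mulLeft₀_apply, this]
    rw [hη.sum_sq (fun w => η ((m ^ 2 - w) / 4) * η (((m ^ 2 - w) / 4 + 1) ^ 2 - m ^ 2)),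
      ← Equiv.sum_comp ((Equiv.mulLeft₀ (4 : F) h4).trans (Equiv.subLeft (m ^ 2)))]
    refine sum_congr rfl fun p _ => ?_
    simp only [Equiv.trans_apply, Equiv.mulLeft₀_apply, Equiv.subLeft_apply]
    rw [show (m ^ 2 - (m ^ 2 - 4 * p)) / 4 = p by field_simp; ring]
  have e3 : ∀ p : F, ∑ m : F, (1 + η (m ^ 2 - 4 * p)) * (η p * η ((p + 1) ^ 2 - m ^ 2)) =
      η p * (-1 + if p = -1 then (Fintype.card F : ℂ) else 0) +
      η p * (-1 + if p = 1 then (Fintype.card F : ℂ) else 0) +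
      ∑ n : F, η n * η (n - 4 * p) * η ((p + 1) ^ 2 - n) * η p := by
    intro p
    rw [hη.sum_sq (fun n => (1 + η (n - 4 * p)) * (η p * η ((p + 1) ^ 2 - n)))]
    have c1 := hη.conic 0 ((p + 1) ^ 2)
    have c2 := hη.conic (4 * p) ((p + 1) ^ 2)
    have c3 : ∑ n : F, η ((p + 1) ^ 2 - n) = 0 :=
      (Equiv.sum_comp (Equiv.subLeft ((p + 1) ^ 2)) η).trans hη.sum_zero
    have i1 : (0 = (p + 1) ^ 2) ↔ p = -1 := by
      rw [eq_comm, sq_eq_zero_iff, eq_neg_iff_add_eq_zero]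
    have i2 : (4 * p = (p + 1) ^ 2) ↔ p = 1 := by
      rw [eq_comm, ← sub_eq_zero, show (p + 1) ^ 2 - 4 * p = (p - 1) ^ 2 by ring, sq_eq_zero_iff,
        sub_eq_zero]
    simp only [i1, sub_zero] at c1
    simp only [i2] at c2
    rw [← c1, ← c2, mul_sum, mul_sum, ← sum_add_distrib, ← sum_add_distrib, ← sub_eq_zero,
      ← sum_sub_distrib, ← mul_zero (η p), ← c3, mul_sum]
    exact sum_congr rfl fun n _ => by ring
  have e4 : ∀ p : F, ∑ n : F, η n * η (n - 4 * p) * η ((p + 1) ^ 2 - n) * η p =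
      ∑ z : F, η z * η (z - 1) * (η p * η ((p + 1) ^ 2 - 4 * p * z)) := by
    intro p
    by_cases hp : p = 0
    · subst hp; simp [MulChar.map_zero η]
    rw [← Equiv.sum_comp (Equiv.mulLeft₀ (4 * p) (mul_ne_zero h4 hp))]
    refine sum_congr rfl fun z _ => ?_
    simp only [Equiv.mulLeft₀_apply]
    rw [show 4 * p * z - 4 * p = 4 * p * (z - 1) by ring]
    simp only [map_mul, hη.four]
    linear_combination (η z * η (z - 1) * η p * η ((p + 1) ^ 2 - 4 * p * z)) * hη.sq_one p hp
  rw [e1]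
  simp only [e2]
  rw [sum_comm]
  simp only [e3, e4, sum_add_distrib, mul_add]
  rw [sum_comm (f := fun p z => η z * η (z - 1) * (η p * η ((p + 1) ^ 2 - 4 * p * z)))]
  simp only [← mul_sum, hη.isogeny]
  simp only [mul_ite, mul_zero, sum_ite_eq', mem_univ, if_true, ← sum_mul, hη.sum_zero,
    hη.neg_one, map_one]
  simp only [mul_sum]
  have : ∑ z : F, ∑ y : F, η z * η (z - 1) * (η y * η (y - 1) * η (y - z)) =
      ∑ z : F, ∑ y : F, η z * η (z - 1) * η y * η (y - 1) * η (y - z) :=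
    sum_congr rfl fun z _ => sum_congr rfl fun y _ => by ring
  rw [this]
  ring

end Quadratic

/-! ### Quartic characters and their Jacobi sums -/

section QuarticChar

variable {F : Type} [Field F] [Fintype F] [DecidableEq F]

/-- `χ` is a quartic character of a field with `4 m + 1` elements, `m` odd, and `g` generates the
unit group; that `χ` has order 4 is expressed by `χ g ^ 2 = -1`. -/
structure Quartic (χ : MulChar F ℂ) (m : ℕ) (g : Fˣ) : Prop where
  card : Fintype.card F = 4 * m + 1
  odd : m % 2 = 1
  gen : ∀ z : F, z ≠ 0 → ∃ n : ℕ, z = (g : F) ^ n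
  gen' : ∀ z : Fˣ, z ∈ Subgroup.zpowers g
  sq : χ g ^ 2 = -1

lemma exists_quartic {χ : MulChar F ℂ} (hχ : orderOf χ = 4) (hmod : Fintype.card F % 8 = 5) :
    ∃ m g, Quartic χ m g := by
  obtain ⟨g, hg⟩ := IsCyclic.exists_generator (α := Fˣ)
  refine ⟨Fintype.card F / 4, g, by omega, by omega, ?_, hg, ?_⟩
  · intro z hz
    obtain ⟨n, hn⟩ := mem_powers_iff_mem_zpowers.2 (hg (Units.mk0 z hz))
    refine ⟨n, ?_⟩
    have := congrArg Units.val hn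
    simpa using this.symm
  · have h4 : χ g ^ 4 = 1 := by
      rw [← pow_apply_ne χ 4 g.ne_zero, ← hχ, pow_orderOf_eq_one, MulChar.one_apply g.isUnit]
    have h2 : χ g ^ 2 ≠ 1 := by
      intro h
      have : χ ^ 2 = 1 := by
        rw [MulChar.eq_iff hg, pow_apply_ne χ 2 g.ne_zero, h, MulChar.one_apply g.isUnit]
      have := orderOf_dvd_of_pow_eq_one this
      rw [hχ] at this
      norm_num at this
    have h : (χ g ^ 2 - 1) * (χ g ^ 2 + 1) = 0 := by linear_combination h4
    rcases mul_eq_zero.1 h with h | h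
    · exact absurd (sub_eq_zero.1 h) h2
    · linear_combination h

variable {χ : MulChar F ℂ} {m : ℕ} {g : Fˣ}

lemma Quartic.four (h : Quartic χ m g) : χ g ^ 4 = 1 := by
  linear_combination (χ g ^ 2 - 1) * h.sq

lemma Quartic.pow_four (h : Quartic χ m g) : χ ^ 4 = 1 := by
  rw [MulChar.eq_iff h.gen', pow_apply_ne χ 4 g.ne_zero, h.four, MulChar.one_apply g.isUnit]

lemma Quartic.two_ne (h : Quartic χ m g) : (2 : F) ≠ 0 := by
  intro h2
  have h1 : ((Fintype.card F : ℕ) : F) = 0 := FiniteField.cast_card_eq_zero F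
  rw [h.card] at h1
  push_cast at h1
  have : (1 : F) = 0 := by linear_combination h1 - 2 * m * h2
  exact one_ne_zero this

lemma Quartic.ringChar_ne (h : Quartic χ m g) : ringChar F ≠ 2 := by
  intro h2
  apply h.two_ne
  have := ringChar.Nat.cast_ringChar (R := F)
  rw [h2] at this
  exact_mod_cast this

lemma Quartic.pos (h : Quartic χ m g) : 0 < m := by have := h.odd; omega

lemma Quartic.orderOf_gen (h : Quartic χ m g) : orderOf g = 4 * m := by
  rw [orderOf_eq_card_of_forall_mem_zpowers h.gen', Nat.card_eq_fintype_card, Fintype.card_units,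
    h.card]
  rfl

lemma Quartic.gen_pow (h : Quartic χ m g) : (g : F) ^ (2 * m) = -1 := by
  have h1 : (g : F) ^ (4 * m) = 1 := by
    rw [← h.orderOf_gen, ← Units.val_pow_eq_pow_val, pow_orderOf_eq_one, Units.val_one]
  have h2 : (g : F) ^ (2 * m) ≠ 1 := by
    intro h2
    have h3 : g ^ (2 * m) = 1 := by ext; simpa using h2
    have := Nat.le_of_dvd (by have := h.pos; omega) (orderOf_dvd_of_pow_eq_one h3)
    rw [h.orderOf_gen] at this
    have := h.pos
    omega
  have h3 : ((g : F) ^ (2 * m) - 1) * ((g : F) ^ (2 * m) + 1) = 0 := by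
    rw [show 4 * m = 2 * m + 2 * m by ring, pow_add] at h1
    linear_combination h1
  rcases mul_eq_zero.1 h3 with h | h
  · exact absurd (sub_eq_zero.1 h) h2
  · linear_combination h

lemma Quartic.neg_one (h : Quartic χ m g) : χ (-1) = -1 := by
  rw [← h.gen_pow, map_pow, pow_mul, h.sq, (Nat.odd_iff.2 h.odd).neg_one_pow]

lemma Quartic.sq_apply_gen (h : Quartic χ m g) : (χ ^ 2) (g : F) = -1 := by
  rw [pow_apply_ne χ 2 g.ne_zero, h.sq]

lemma Quartic.ne_one (h : Quartic χ m g) : χ ≠ 1 := by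
  rintro rfl
  have := h.sq
  rw [MulChar.one_apply g.isUnit] at this
  norm_num at this

lemma Quartic.sq_ne_one (h : Quartic χ m g) : χ ^ 2 ≠ 1 := by
  intro h1
  have := h.sq_apply_gen
  rw [h1, MulChar.one_apply g.isUnit] at this
  norm_num at this

lemma Quartic.inv_eq (h : Quartic χ m g) : χ⁻¹ = χ ^ 3 := by
  rw [inv_eq_iff_mul_eq_one, ← pow_succ', h.pow_four]

lemma Quartic.cube_ne_one (h : Quartic χ m g) : χ ^ 3 ≠ 1 := by
  rw [← h.inv_eq]; simpa using h.ne_one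

lemma Quartic.unique_quadratic (h : Quartic χ m g) {φ : MulChar F ℂ} (hφ : orderOf φ = 2) :
    φ = χ ^ 2 := by
  rw [MulChar.eq_iff h.gen', h.sq_apply_gen]
  have h1 : φ g ^ 2 = 1 := by
    rw [← pow_apply_ne φ 2 g.ne_zero, ← hφ, pow_orderOf_eq_one, MulChar.one_apply g.isUnit]
  rcases mul_self_eq_one_iff.1 ((pow_two (φ g)).symm.trans h1) with h2 | h2
  · exfalso
    have : φ = 1 := by rw [MulChar.eq_iff h.gen', h2, MulChar.one_apply g.isUnit]
    rw [this, orderOf_one] at hφ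
    norm_num at hφ
  · exact h2

lemma Quartic.isFourth (h : Quartic χ m g) {z : F} (hz : χ z = 1) : ∃ c : F, c ≠ 0 ∧ z = c ^ 4 := by
  have hz0 : z ≠ 0 := by rintro rfl; rw [MulChar.map_zero] at hz; norm_num at hz
  obtain ⟨n, rfl⟩ := h.gen z hz0
  rw [map_pow, ← Nat.div_add_mod n 4, pow_add, pow_mul, h.four, one_pow, one_mul] at hz
  have hs := h.sq
  have hlt := Nat.mod_lt n (show 0 < 4 by norm_num)
  have h0 : n % 4 = 0 := by
    interval_cases hn : n % 4
    · rfl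
    · rw [pow_one] at hz; rw [hz] at hs; norm_num at hs
    · rw [hz] at hs; norm_num at hs
    · have : χ g = -1 := by linear_combination -hz + χ g * hs
      rw [this] at hs; norm_num at hs
  refine ⟨(g : F) ^ (n / 4), pow_ne_zero _ g.ne_zero, ?_⟩
  rw [← pow_mul]; congr 1; omega

/-- `2` is not a square as `q ≡ 5 (mod 8)`, so `χ(4) = χ(2)² = -1`. -/
lemma Quartic.chi_four (h : Quartic χ m g) : χ 4 = -1 := by
  have h2 := h.two_ne
  obtain ⟨n, hn⟩ := h.gen 2 h2
  have hodd : Odd n := by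
    by_contra hne
    rw [Nat.not_odd_iff_even] at hne
    have hs : IsSquare (2 : F) := by rw [hn]; exact hne.isSquare_pow _
    rw [FiniteField.isSquare_two_iff] at hs
    have := h.card
    have := h.odd
    omega
  rw [show (4 : F) = 2 ^ 2 by norm_num, map_pow, hn, map_pow, ← pow_mul, mul_comm, pow_mul, h.sq,
    hodd.neg_one_pow]

lemma Quartic.sq_eq_quadraticChar (h : Quartic χ m g) (z : F) :
    (χ ^ 2) z = (quadraticChar F z : ℂ) := by
  have h1 : χ ^ 2 = (quadraticChar F).ringHomComp (Int.castRingHom ℂ) := by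
    rw [MulChar.eq_iff h.gen', h.sq_apply_gen]
    rcases quadraticChar_dichotomy (F := F) g.ne_zero with h2 | h2
    · exfalso
      apply quadraticChar_ne_one h.ringChar_ne
      rw [MulChar.eq_iff h.gen', h2, MulChar.one_apply g.isUnit]
    · simp [h2]
  rw [h1]; rfl

lemma Quartic.quadData (h : Quartic χ m g) : QuadData (χ ^ 2) where
  two_ne := h.two_ne
  neg_one := by rw [pow_apply_ne χ 2 (by simp), h.neg_one]; norm_num
  sq_one z hz := by rw [pow_apply_ne χ 2 hz, ← pow_mul]; exact apply_pow_four h.pow_four hz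
  sum_zero := MulChar.sum_eq_zero_of_ne_one h.sq_ne_one
  sum_sq f := by
    rw [← Finset.sum_fiberwise univ (fun d : F => d ^ 2) (fun d => f (d ^ 2))]
    refine sum_congr rfl fun w _ => ?_
    have hc := quadraticChar_card_sqrts h.ringChar_ne w
    rw [sum_congr rfl (fun d hd => by rw [(mem_filter.1 hd).2] : ∀ d ∈ univ.filter
      (fun d : F => d ^ 2 = w), f (d ^ 2) = f w), sum_const, nsmul_eq_mul, h.sq_eq_quadraticChar]
    congr 1
    have hs : {x : F | x ^ 2 = w}.toFinset = univ.filter (fun d : F => d ^ 2 = w) := by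
      ext; simp
    rw [hs] at hc
    have := congrArg (Int.cast : ℤ → ℂ) hc
    push_cast at this
    rw [this]; ring

/-- The relation `J(ψ, ψ) = ψ(4)⁻¹ J(χ², ψ)`, from the substitution `t = (1 - d) / 2`. -/
lemma Quartic.jacobi_self (h : Quartic χ m g) {ψ : MulChar F ℂ} (hψ : ψ ≠ 1) (h4 : ψ 4 = -1) :
    jacobiSum (χ ^ 2) ψ = - jacobiSum ψ ψ := by
  have h2 := h.two_ne
  have hf : (4 : F) ≠ 0 := by rw [show (4 : F) = 2 * 2 by norm_num]; exact mul_ne_zero h2 h2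
  have h1 : jacobiSum ψ ψ = - ∑ d : F, ψ (1 - d ^ 2) := by
    rw [jacobiSum, ← Equiv.sum_comp ((Equiv.subLeft (1 : F)).trans
      (Equiv.mulLeft₀ (2 : F)⁻¹ (inv_ne_zero h2))), ← sum_neg_distrib]
    refine sum_congr rfl fun d _ => ?_
    simp only [Equiv.trans_apply, Equiv.subLeft_apply, Equiv.mulLeft₀_apply]
    rw [← map_mul, show 1 - d ^ 2 = 4 * (2⁻¹ * (1 - d) * (1 - 2⁻¹ * (1 - d))) by field_simp; ring,
      map_mul ψ 4, h4]
    ring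
  rw [h1, neg_neg, h.quadData.sum_sq (fun w => ψ (1 - w))]
  simp only [add_mul, one_mul, sum_add_distrib]
  have h3 : ∑ w : F, ψ (1 - w) = 0 :=
    (Equiv.sum_comp (Equiv.subLeft (1 : F)) ψ).trans (MulChar.sum_eq_zero_of_ne_one hψ)
  rw [h3, zero_add, jacobiSum]

lemma Quartic.jacobiData (h : Quartic χ m g) :
    JacobiData χ (Fintype.card F) (jacobiSum χ χ) (jacobiSum (χ ^ 3) (χ ^ 3))
      (HS χ (2, 2, 1, 2, 3)) (HS χ (2, 2, 2, 2, 2)) where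
  pow_four := h.pow_four
  neg_one := h.neg_one
  S_eq := rfl
  W_eq := rfl
  jac := by
    have h21 : jacobiSum (χ ^ 2) χ = - jacobiSum χ χ := h.jacobi_self h.ne_one h.chi_four
    have h23 : jacobiSum (χ ^ 2) (χ ^ 3) = - jacobiSum (χ ^ 3) (χ ^ 3) := by
      refine h.jacobi_self h.cube_ne_one ?_
      rw [MulChar.pow_apply' χ (by norm_num), h.chi_four]; norm_num
    have h13 : jacobiSum χ (χ ^ 3) = 1 := by
      rw [← h.inv_eq, jacobiSum_nontrivial_inv h.ne_one, h.neg_one]; norm_num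
    have h22 : jacobiSum (χ ^ 2) (χ ^ 2) = -1 := by
      have : (χ ^ 2)⁻¹ = χ ^ 2 := by rw [inv_eq_iff_mul_eq_one, ← pow_add, h.pow_four]
      have h5 := jacobiSum_nontrivial_inv h.sq_ne_one
      rwa [this, h.quadData.neg_one] at h5
    have h12 := h21; rw [jacobiSum_comm] at h12
    have h32 := h23; rw [jacobiSum_comm] at h32
    have h31 := h13; rw [jacobiSum_comm] at h31
    have h1 := jacobiSum_one_nontrivial h.ne_one
    have h2 := jacobiSum_one_nontrivial h.sq_ne_one
    have h3 := jacobiSum_one_nontrivial h.cube_ne_one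
    have h1' := h1; rw [jacobiSum_comm] at h1'
    have h2' := h2; rw [jacobiSum_comm] at h2'
    have h3' := h3; rw [jacobiSum_comm] at h3'
    have h0 := jacobiSum_one_one (F := F) (R := ℂ)
    intro i hi j hj
    interval_cases i <;> interval_cases j <;>
      simp only [pow_zero, pow_one, PaleyK4.jac, Lin.eval, *] <;> push_cast <;> ring

/-- As `χ²(t) = χ(t²)`, the character sum of `y² = t³ - t` is a sum over `w = t²`, hence equals
`-(P + Q)`. -/
lemma Quartic.W_eq (h : Quartic χ m g) :
    HS χ (2, 2, 2, 2, 2) =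
      (jacobiSum χ χ + jacobiSum (χ ^ 3) (χ ^ 3)) ^ 2 - 2 * Fintype.card F := by
  have hq := h.quadData
  have h21 := h.jacobiData.jac 2 (by norm_num) 1 (by norm_num)
  have h23 := h.jacobiData.jac 2 (by norm_num) 3 (by norm_num)
  simp only [jac, Lin.eval] at h21 h23
  have hA : ∑ t : F, (χ ^ 2) t * (χ ^ 2) (t ^ 2 - 1) =
      - (jacobiSum χ χ + jacobiSum (χ ^ 3) (χ ^ 3)) := by
    have e : ∀ t : F, (χ ^ 2) t = χ (t ^ 2) := fun t => by
      rw [MulChar.pow_apply' χ (by norm_num), map_pow]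
    rw [sum_congr rfl fun t _ => by rw [e t],
      hq.sum_sq (fun w => χ w * (χ ^ 2) (w - 1))]
    have e2 : ∀ w : F, (1 + (χ ^ 2) w) * (χ w * (χ ^ 2) (w - 1)) =
        (χ ^ 1) w * (χ ^ 2) (1 - w) + (χ ^ 3) w * (χ ^ 2) (1 - w) := by
      intro w
      rw [← neg_sub 1 w, hq.neg, pow_succ χ 2, MulChar.mul_apply, pow_one]
      ring
    simp only [e2, sum_add_distrib]
    rw [jacobiSum_comm] at h21 h23
    simp only [jacobiSum] at h21 h23
    rw [h21, h23]
    simp [jacobiSum]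
    ring
  have := hq.square
  rw [hA] at this
  simp only [HS]
  linear_combination - this

end QuarticChar

/-! ### Integer preliminaries -/

section Integers

/-- By Lucas's theorem: for `p ^ r = 4 m + 1` all base `p` digits of `m` are `(p - 1) / 4`, so adding
`m` and `2 m` involves no carries. -/
lemma choose_unit {p : ℕ} (hp : p.Prime) (hp4 : p % 4 = 1) (r : ℕ) :
    ∀ m, p ^ r = 4 * m + 1 → ¬ p ∣ (3 * m).choose m := by
  induction r with
  | zero =>
    intro m hm
    have : m = 0 := by rw [pow_zero] at hm; omega
    subst this
    simpa using hp.one_lt.ne'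
  | succ r ih =>
    intro m hm hdvd
    have : Fact p.Prime := ⟨hp⟩
    obtain ⟨m', hm'⟩ : ∃ m', p ^ r = 4 * m' + 1 := by
      have : p ^ r % 4 = 1 := by rw [Nat.pow_mod, hp4, one_pow]; rfl
      exact ⟨p ^ r / 4, by omega⟩
    obtain ⟨c, hc⟩ : ∃ c, p = 4 * c + 1 := ⟨p / 4, by omega⟩
    have hm2 : m = c + p * m' := by
      have : 4 * m + 1 = 4 * (c + p * m') + 1 := by
        rw [← hm, pow_succ, hm']
        nlinarith
      omega
    have hp0 := hp.pos
    have e1 : m % p = c := by rw [hm2, Nat.add_mul_mod_self_left, Nat.mod_eq_of_lt (by omega)]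
    have e2 : m / p = m' := by
      rw [hm2, Nat.add_mul_div_left _ _ hp0, Nat.div_eq_of_lt (by omega), zero_add]
    have h3 : 3 * m = 3 * c + p * (3 * m') := by rw [hm2]; ring
    have e3 : 3 * m % p = 3 * c := by
      rw [h3, Nat.add_mul_mod_self_left, Nat.mod_eq_of_lt (by omega)]
    have e4 : 3 * m / p = 3 * m' := by
      rw [h3, Nat.add_mul_div_left _ _ hp0, Nat.div_eq_of_lt (by omega), zero_add]
    have hl := Choose.choose_modEq_choose_mod_mul_choose_div_nat (n := 3 * m) (k := m) (p := p)
    rw [e1, e2, e3, e4] at hl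
    have := (hl.dvd_iff dvd_rfl).1 hdvd
    rcases hp.dvd_mul.1 this with h | h
    · have hf : p ∣ (3 * c).factorial := by
        rw [← Nat.choose_mul_factorial_mul_factorial (show c ≤ 3 * c by omega), mul_assoc]
        exact h.mul_right _
      have := hp.dvd_factorial.1 hf
      omega
    · exact ih m' hm' h

lemma prime_mod_eight {p r : ℕ} (h : p ^ r % 8 = 5) : p % 8 = 5 := by
  have h2 : p ^ r = (p ^ 2) ^ (r / 2) * p ^ (r % 2) := by
    rw [← pow_mul, ← pow_add, Nat.div_add_mod]
  by_cases ho : p % 2 = 1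
  · have hs : p ^ 2 % 8 = 1 := by
      rw [Nat.pow_mod]
      have : p % 8 = 1 ∨ p % 8 = 3 ∨ p % 8 = 5 ∨ p % 8 = 7 := by omega
      rcases this with h | h | h | h <;> rw [h]
    have hs' : (p ^ 2) ^ (r / 2) % 8 = 1 := by rw [Nat.pow_mod, hs, one_pow]; rfl
    rw [h2, Nat.mul_mod, hs', one_mul, Nat.mod_mod] at h
    rcases Nat.mod_two_eq_zero_or_one r with h0 | h0 <;> rw [h0] at h
    · norm_num at h
    · rwa [pow_one] at h
  · exfalso
    rcases Nat.eq_zero_or_pos r with rfl | hr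
    · norm_num at h
    · have h0 : 2 ∣ p := by omega
      have := dvd_pow h0 hr.ne'
      omega

/-- Uniqueness up to sign of the first term in a representation of `p ^ r` as an odd square
prime to `p` plus an even square: `p ^ r` divides one of `x b ± a y`, which are even and at most
`p ^ r` in absolute value, so that one is zero. -/
lemma sq_eq_of_two_squares {p r : ℕ} (hp : p.Prime) {x y a b : ℤ}
    (h1 : (p : ℤ) ^ r = x ^ 2 + y ^ 2) (h2 : (p : ℤ) ^ r = a ^ 2 + b ^ 2)
    (hx : x % 2 = 1) (hy : y % 2 = 0) (ha : a % 2 = 1) (hb : b % 2 = 0) (hp2 : p ≠ 2)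
    (hpx : ¬ (p : ℤ) ∣ x) (hpa : ¬ (p : ℤ) ∣ a) : x ^ 2 = a ^ 2 := by
  have hpz : Prime (p : ℤ) := Nat.prime_iff_prime_int.1 hp
  have hq0 : (0 : ℤ) < (p : ℤ) ^ r := pow_pos (by exact_mod_cast hp.pos) r
  have hodd : ((p : ℤ) ^ r) % 2 = 1 := by
    rw [h1, sq, sq, Int.add_emod, Int.mul_emod, hx, Int.mul_emod y, hy]; rfl
  rcases Nat.eq_zero_or_pos r with rfl | hr
  · rw [pow_zero] at h1 h2
    have hy0 : y = 0 := by
      by_contra hne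
      have : 1 ≤ |y| := Int.one_le_abs hne
      have hx1 : 1 ≤ |x| := Int.one_le_abs (by omega)
      nlinarith [sq_abs x, sq_abs y]
    have hb0 : b = 0 := by
      by_contra hne
      have : 1 ≤ |b| := Int.one_le_abs hne
      have hx1 : 1 ≤ |a| := Int.one_le_abs (by omega)
      nlinarith [sq_abs a, sq_abs b]
    rw [hy0] at h1; rw [hb0] at h2; linarith
  have hprod : (x * b - a * y) * (x * b + a * y) = (p : ℤ) ^ r * (x ^ 2 - a ^ 2) := by
    linear_combination x ^ 2 * h2 * (-1) + a ^ 2 * h1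
  have key : ∀ s t : ℤ, s * t = (p : ℤ) ^ r * (x ^ 2 - a ^ 2) → (p : ℤ) ^ r ∣ s → s % 2 = 0 →
      s ^ 2 ≤ ((p : ℤ) ^ r) ^ 2 → x ^ 2 = a ^ 2 := by
    rintro s t hst ⟨k, rfl⟩ heven hle
    have hk : k % 2 = 0 := by
      rw [Int.mul_emod, hodd] at heven
      omega
    have hk0 : k = 0 := by
      by_contra hne
      have h4 : 2 ≤ |k| := Int.le_of_dvd (abs_pos.2 hne) ((dvd_abs _ _).2 (by omega))
      have : (4 : ℤ) ≤ k ^ 2 := by nlinarith [sq_abs k]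
      have h5 : 0 < ((p : ℤ) ^ r) ^ 2 := pow_pos hq0 2
      rw [mul_pow] at hle
      nlinarith
    rw [hk0] at hst
    have : (p : ℤ) ^ r * (x ^ 2 - a ^ 2) = 0 := by rw [← hst]; ring
    rcases mul_eq_zero.1 this with h | h
    · omega
    · linarith
  have hb1 : (x * b - a * y) ^ 2 ≤ ((p : ℤ) ^ r) ^ 2 := by
    have : ((p : ℤ) ^ r) ^ 2 = (x * b - a * y) ^ 2 + (x * a + y * b) ^ 2 := by
      rw [sq ((p : ℤ) ^ r)]; nth_rewrite 1 [h1]; rw [h2]; ring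
    nlinarith [sq_nonneg (x * a + y * b)]
  have hb2 : (x * b + a * y) ^ 2 ≤ ((p : ℤ) ^ r) ^ 2 := by
    have : ((p : ℤ) ^ r) ^ 2 = (x * b + a * y) ^ 2 + (x * a - y * b) ^ 2 := by
      rw [sq ((p : ℤ) ^ r)]; nth_rewrite 1 [h1]; rw [h2]; ring
    nlinarith [sq_nonneg (x * a - y * b)]
  have hbe := Int.dvd_of_emod_eq_zero hb
  have hye := Int.dvd_of_emod_eq_zero hy
  have hm1 : (x * b - a * y) % 2 = 0 :=
    Int.emod_eq_zero_of_dvd (dvd_sub (hbe.mul_left _) (hye.mul_left _))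
  have hm2 : (x * b + a * y) % 2 = 0 :=
    Int.emod_eq_zero_of_dvd (dvd_add (hbe.mul_left _) (hye.mul_left _))
  by_cases hd : (p : ℤ) ∣ x * b - a * y
  · by_cases hd' : (p : ℤ) ∣ x * b + a * y
    · exfalso
      have hs : (p : ℤ) ∣ 2 * (x * b) := by
        have := dvd_add hd hd'
        rwa [show x * b - a * y + (x * b + a * y) = 2 * (x * b) by ring] at this
      have hpb : (p : ℤ) ∣ b := by
        rcases hpz.dvd_or_dvd hs with h | h
        · have := Int.le_of_dvd (by norm_num) h
          have := hp.two_le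
          omega
        · exact (hpz.dvd_or_dvd h).resolve_left hpx
      have : (p : ℤ) ∣ a ^ 2 := by
        have h3 : (p : ℤ) ∣ (p : ℤ) ^ r := dvd_pow_self _ hr.ne'
        have h4 := dvd_sub h3 (dvd_pow hpb (two_ne_zero))
        rwa [h2, add_sub_cancel_right] at h4
      exact hpa (hpz.dvd_of_dvd_pow this)
    · exact key _ _ hprod (hpz.pow_dvd_of_dvd_mul_right r hd' ⟨_, hprod⟩) hm1 hb1
  · exact key _ _ ((mul_comm _ _).trans hprod)
      (hpz.pow_dvd_of_dvd_mul_left r hd ⟨_, hprod⟩) hm2 hb2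

lemma int_indep {ι : ℂ} (hι : ι ^ 2 = -1) {A B : ℤ} (h : (A : ℂ) + B * ι = 0) : A = 0 ∧ B = 0 := by
  have h1 : (A : ℂ) ^ 2 + (B : ℂ) ^ 2 = 0 := by
    linear_combination ((A : ℂ) - B * ι) * h + B ^ 2 * hι
  have h2 : A ^ 2 + B ^ 2 = 0 := by exact_mod_cast h1
  constructor <;> nlinarith [sq_nonneg A, sq_nonneg B]

end Integers

/-! ### Arithmetic of the quartic Jacobi sum -/

section Arithmetic

variable {F : Type} [Field F] [Fintype F] [DecidableEq F]

variable {χ : MulChar F ℂ} {m : ℕ} {g : Fˣ}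

lemma sum_pow_eq {n i : ℕ} (hc : Fintype.card F = n + 1) (hi : i ≠ 0) :
    ∑ t : F, t ^ i = if n ∣ i then -1 else 0 := by
  have := FiniteField.sum_pow_units F i
  rw [hc, Nat.add_sub_cancel] at this
  rw [← this, ← Finset.sum_subset (subset_univ (univ.filter fun t : F => t ≠ 0))]
  · symm
    refine Finset.sum_bij' (fun u _ => (u : F)) (fun t ht => Units.mk0 t (mem_filter.1 ht).2)
      ?_ ?_ ?_ ?_ ?_ <;> simp
  · intro t _ ht
    have : t = 0 := by simpa using ht
    rw [this, zero_pow hi]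

lemma sum_expand (n : ℕ) :
    ∑ t : F, (t * (1 - t)) ^ n =
      ∑ k ∈ range (n + 1), (-1) ^ k * (n.choose k : F) * ∑ t : F, t ^ (n + k) := by
  simp only [mul_sum]
  rw [sum_comm]
  refine sum_congr rfl fun t _ => ?_
  rw [mul_pow, show 1 - t = -t + 1 by ring, add_pow, mul_sum]
  refine sum_congr rfl fun k _ => ?_
  rw [one_pow, neg_pow, pow_add]
  ring

/-- All exponents occurring after expansion are smaller than `q - 1`. -/
lemma Quartic.sum_low (h : Quartic χ m g) : ∑ t : F, (t * (1 - t)) ^ m = 0 := by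
  have := h.pos
  rw [sum_expand]
  refine sum_eq_zero fun k hk => ?_
  rw [mem_range] at hk
  rw [FiniteField.sum_pow_lt_card_sub_one _ _ (by rw [h.card]; omega), mul_zero]

/-- After expansion only the exponent `4 m = q - 1` contributes. -/
lemma Quartic.sum_high (h : Quartic χ m g) :
    ∑ t : F, (t * (1 - t)) ^ (3 * m) = ((3 * m).choose m : F) := by
  have := h.pos
  rw [sum_expand, sum_eq_single m]
  · rw [sum_pow_eq h.card (by omega), if_pos ⟨1, by ring⟩, (Nat.odd_iff.2 h.odd).neg_one_pow]
    ring
  · intro k hk hne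
    rw [mem_range] at hk
    rw [sum_pow_eq h.card (by omega), if_neg, mul_zero]
    rintro ⟨j, hj⟩
    have : j = 1 := by
      rcases j with _ | _ | j
      · omega
      · rfl
      · nlinarith
    subst this
    omega
  · intro hm; exact absurd (mem_range.2 (by omega)) hm

/-- The same integral coordinates describe the values of `χ` with respect to `1, χ(g)` and the
residue symbol `z ^ m` with respect to `1, g ^ m`. This replaces reduction modulo a prime above
`p`. -/
lemma Quartic.coords (h : Quartic χ m g) (z : F) : ∃ c : ℤ × ℤ,
    χ z = c.1 + c.2 * χ g ∧ (χ ^ 3) z = c.1 - c.2 * χ g ∧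
    z ^ m = c.1 + c.2 * (g : F) ^ m ∧ z ^ (3 * m) = c.1 - c.2 * (g : F) ^ m ∧
    (z ≠ 0 → (c.1 + c.2) % 2 = 1) := by
  by_cases hz : z = 0
  · subst hz
    have := h.pos
    refine ⟨(0, 0), ?_, ?_, ?_, ?_, by simp⟩
    · simp [MulChar.map_zero]
    · simp [MulChar.map_zero]
    · simp [this.ne']
    · simp [this.ne']
  · obtain ⟨n, hn⟩ := h.gen z hz
    have hs := h.sq
    have hw : ((g : F) ^ m) ^ 2 = -1 := by rw [← pow_mul, mul_comm, h.gen_pow]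
    have hw4 : ((g : F) ^ m) ^ 4 = 1 := by linear_combination (((g : F) ^ m) ^ 2 - 1) * hw
    have e1 : χ z = χ g ^ (n % 4) := by rw [hn, map_pow, pow_mod_four h.four]
    have e2 : z ^ m = ((g : F) ^ m) ^ (n % 4) := by
      rw [pow_mod_four hw4, hn, ← pow_mul, ← pow_mul, mul_comm]
    rw [pow_apply_ne χ 3 hz, mul_comm 3 m, pow_mul z, e1, e2]
    generalize χ (g : F) = ι at *
    generalize (g : F) ^ m = ω at *
    have hlt := Nat.mod_lt n (show 0 < 4 by norm_num)
    interval_cases n % 4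
    · exact ⟨(1, 0), by simp⟩
    · refine ⟨(0, 1), by simp, ?_, by simp, ?_, by simp⟩ <;> push_cast
      · linear_combination ι * hs
      · linear_combination ω * hw
    · refine ⟨(-1, 0), ?_, ?_, ?_, ?_, by simp⟩ <;> push_cast
      · linear_combination hs
      · linear_combination (ι ^ 4 - ι ^ 2 + 1) * hs
      · linear_combination hw
      · linear_combination (ω ^ 4 - ω ^ 2 + 1) * hw
    · refine ⟨(0, -1), ?_, ?_, ?_, ?_, by simp⟩ <;> push_cast
      · linear_combination ι * hs
      · linear_combination (ι ^ 7 - ι ^ 5 + ι ^ 3 - ι) * hs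
      · linear_combination ω * hw
      · linear_combination (ω ^ 7 - ω ^ 5 + ω ^ 3 - ω) * hw

/-- The coordinates of `P` in terms of `1, χ(g)`: their norm, their residues modulo 4 and 2, and
primality to `p`. -/
lemma Quartic.jacobi_arith (h : Quartic χ m g) {p r : ℕ} (hp : p.Prime)
    (hq : Fintype.card F = p ^ r) (hmod : Fintype.card F % 8 = 5) : ∃ a b : ℤ,
    jacobiSum χ χ = a + b * χ g ∧ jacobiSum (χ ^ 3) (χ ^ 3) = a - b * χ g ∧
    (Fintype.card F : ℤ) = a ^ 2 + b ^ 2 ∧ a % 4 = 3 ∧ b % 2 = 0 ∧ ¬ (p : ℤ) ∣ a := by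
  choose c hc1 hc2 hc3 hc4 hc5 using h.coords
  refine ⟨∑ t : F, (c (t * (1 - t))).1, ∑ t : F, (c (t * (1 - t))).2, ?_⟩
  set a := ∑ t : F, (c (t * (1 - t))).1 with ha
  set b := ∑ t : F, (c (t * (1 - t))).2 with hb
  have hP : jacobiSum χ χ = a + b * χ g := by
    rw [jacobiSum, sum_congr rfl fun t _ => (map_mul χ t (1 - t)).symm.trans (hc1 _), sum_add_distrib, ← sum_mul, ha, hb]; push_cast; rfl
  have hQ : jacobiSum (χ ^ 3) (χ ^ 3) = a - b * χ g := by
    rw [jacobiSum, sum_congr rfl fun t _ => (map_mul (χ ^ 3) t (1 - t)).symm.trans (hc2 _), sum_sub_distrib, ← sum_mul, ha, hb]; push_cast; rfl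
  have hpr : p % 8 = 5 := prime_mod_eight (hq ▸ hmod)
  have : Fact p.Prime := ⟨hp⟩
  have hr : r ≠ 0 := by rintro rfl; rw [hq] at hmod; norm_num at hmod
  have hcp : CharP F p := by
    have h0 : ((p : F)) ^ r = 0 := by
      have := FiniteField.cast_card_eq_zero F
      rw [hq] at this; exact_mod_cast this
    have h1 := (pow_eq_zero_iff hr).1 h0
    have h2 := (Nat.prime_dvd_prime_iff_eq (CharP.char_is_prime F (ringChar F)) hp).1
      (ringChar.dvd h1)
    exact h2 ▸ ringChar.charP F
  have hnorm : (Fintype.card F : ℤ) = a ^ 2 + b ^ 2 := by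
    have h1 := jacobiSum_mul_jacobiSum_inv (F' := ℂ) (F := F) (χ := χ) (φ := χ)
      (by
        have : ringChar F = p := ringChar.eq F p
        rw [this, ringChar.eq_zero]; exact hp.ne_zero.symm) h.ne_one h.ne_one
      (by rw [← pow_two]; exact h.sq_ne_one)
    rw [h.inv_eq, hP, hQ] at h1
    have h2 : (Fintype.card F : ℂ) = (a : ℂ) ^ 2 + (b : ℂ) ^ 2 := by
      linear_combination -h1 + b ^ 2 * h.sq * (-1)
    exact_mod_cast h2
  -- Expanding `∑ (χ(t) - 1) (χ²(1 - t) - 1) = J(χ, χ²) + q` in coordinates gives `a + b` modulo 4.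
  have hJ : jacobiSum χ (χ ^ 2) = - jacobiSum χ χ := by
    rw [jacobiSum_comm]; exact h.jacobi_self h.ne_one h.chi_four
  have hexp : ∑ t : F, (χ t - 1) * ((χ ^ 2) (1 - t) - 1) = (Fintype.card F : ℂ) - (a + b * χ g) := by
    have h3 : ∑ w : F, (χ ^ 2) (1 - w) = 0 :=
      (Equiv.sum_comp (Equiv.subLeft (1 : F)) _).trans (MulChar.sum_eq_zero_of_ne_one h.sq_ne_one)
    have h4 := MulChar.sum_eq_zero_of_ne_one h.ne_one
    rw [← hP]
    have : ∀ t : F, (χ t - 1) * ((χ ^ 2) (1 - t) - 1) =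
        χ t * (χ ^ 2) (1 - t) - (χ ^ 2) (1 - t) - χ t + 1 := fun t => by ring
    simp only [this, sum_add_distrib, sum_sub_distrib, h3, h4]
    rw [jacobiSum] at hJ
    rw [hJ]; simp; ring
  set A : ℤ := ∑ t : F, ((c t).1 - 1) * (quadraticChar F (1 - t) - 1) with hA
  set B : ℤ := ∑ t : F, (c t).2 * (quadraticChar F (1 - t) - 1) with hB
  have hAB : ∑ t : F, (χ t - 1) * ((χ ^ 2) (1 - t) - 1) = (A : ℂ) + B * χ g := by
    rw [hA, hB]; push_cast
    rw [sum_mul, ← sum_add_distrib]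
    refine sum_congr rfl fun t _ => ?_
    rw [hc1, h.sq_eq_quadraticChar]; ring
  obtain ⟨hA0, hB0⟩ := int_indep h.sq (A := A - Fintype.card F + a) (B := B + b) (by
    push_cast; linear_combination -hAB + hexp)
  have hc0 : c 0 = (0, 0) := by
    have h1 := hc1 0
    rw [MulChar.map_zero] at h1
    have := int_indep h.sq h1.symm
    ext
    · exact this.1
    · exact this.2
  have hc1' : c 1 = (1, 0) := by
    have h1 := hc1 1
    rw [map_one] at h1
    have := int_indep h.sq (A := (c 1).1 - 1) (B := (c 1).2) (by push_cast; linear_combination -h1)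
    ext
    · exact sub_eq_zero.1 this.1
    · exact this.2
  have heven : ∀ t : F, t ≠ 1 → (2 : ℤ) ∣ quadraticChar F (1 - t) - 1 := by
    intro t ht
    rcases quadraticChar_dichotomy (F := F) (a := 1 - t) (sub_ne_zero.2 ht.symm) with h | h <;>
      rw [h] <;> norm_num
  have hB2 : (2 : ℤ) ∣ B := by
    refine dvd_sum fun t _ => ?_
    by_cases ht : t = 1
    · rw [ht, hc1']; simp
    · exact (heven t ht).mul_left _
  have hAB4 : (4 : ℤ) ∣ A + B := by
    rw [hA, hB, ← sum_add_distrib]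
    refine dvd_sum fun t _ => ?_
    rw [← add_mul]
    by_cases ht : t = 1
    · rw [ht, hc1']; simp
    by_cases ht0 : t = 0
    · rw [ht0]; simp
    · refine mul_dvd_mul (a := 2) (c := 2) ?_ (heven t ht)
      have := hc5 t ht0
      omega
  have hq8 : (Fintype.card F : ℤ) % 8 = 5 := by omega
  have hbe : b % 2 = 0 := by omega
  have hab : (a + b) % 4 = 1 := by omega
  refine ⟨hP, hQ, hnorm, ?_, hbe, ?_⟩
  · obtain ⟨b', hb'⟩ := Int.dvd_of_emod_eq_zero hbe
    obtain ⟨a', ha'⟩ : ∃ a', a = 2 * a' + 1 := ⟨a / 2, by omega⟩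
    have e1 : a ^ 2 = 4 * (a' * (a' + 1)) + 1 := by rw [ha']; ring
    have e2 : b ^ 2 = 4 * (b' * b') := by rw [hb']; ring
    have e3 : a' * (a' + 1) % 2 = 0 := Int.emod_eq_zero_of_dvd (Int.even_mul_succ_self a').two_dvd
    rcases Int.emod_two_eq_zero_or_one b' with h0 | h0
    · have : b' * b' % 2 = 0 := by rw [Int.mul_emod, h0]; rfl
      omega
    · omega
  · intro hpa
    have h1 := h.sum_low
    have h2 := h.sum_high
    rw [sum_congr rfl fun t _ => hc3 _] at h1
    rw [sum_congr rfl fun t _ => hc4 _] at h2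
    rw [sum_add_distrib, ← sum_mul] at h1
    rw [sum_sub_distrib, ← sum_mul] at h2
    have h3 : (a : F) = 0 := (CharP.intCast_eq_zero_iff F p a).2 hpa
    rw [ha] at h3
    push_cast at h3
    have h4 : (((3 * m).choose m : ℕ) : F) = 0 := by linear_combination -h1 - h2 + 2 * h3
    rw [CharP.cast_eq_zero_iff F p] at h4
    exact choose_unit hp (by omega) r m (by rw [← hq, h.card]) h4

lemma Quartic.jacobi_sum_prod (h : Quartic χ m g) {p r : ℕ} (hp : p.Prime)
    (hq : Fintype.card F = p ^ r) (hmod : Fintype.card F % 8 = 5) {x y : ℤ}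
    (hxy : (Fintype.card F : ℤ) = x ^ 2 + y ^ 2) (hx : x % 4 = 1) (hpx : ¬ (p : ℤ) ∣ x) :
    jacobiSum χ χ + jacobiSum (χ ^ 3) (χ ^ 3) = -2 * x ∧
      jacobiSum χ χ * jacobiSum (χ ^ 3) (χ ^ 3) = Fintype.card F := by
  obtain ⟨a, b, hP, hQ, hn, ha, hb, hpa⟩ := h.jacobi_arith hp hq hmod
  have hy : y % 2 = 0 := by
    by_contra hne
    obtain ⟨x', hx'⟩ : ∃ x', x = 2 * x' + 1 := ⟨x / 2, by omega⟩
    obtain ⟨y', hy'⟩ : ∃ y', y = 2 * y' + 1 := ⟨y / 2, by omega⟩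
    have : (Fintype.card F : ℤ) = 2 * (2 * x' ^ 2 + 2 * x' + 2 * y' ^ 2 + 2 * y' + 1) := by
      rw [hxy, hx', hy']; ring
    omega
  have hp8 : p % 8 = 5 := prime_mod_eight (hq ▸ hmod)
  have hsq : x ^ 2 = a ^ 2 := by
    have hq' : (p : ℤ) ^ r = (Fintype.card F : ℤ) := by rw [hq]; push_cast; rfl
    exact sq_eq_of_two_squares hp (hq'.trans hxy) (hq'.trans hn) (by omega) hy (by omega) hb
      (by omega) hpx hpa
  have hxa : a = -x := by
    rcases sq_eq_sq_iff_eq_or_eq_neg.1 hsq with h | h <;> omega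
  have hn' : (Fintype.card F : ℂ) = (a : ℂ) ^ 2 + (b : ℂ) ^ 2 := by exact_mod_cast hn
  have hxa' : (a : ℂ) = - x := by exact_mod_cast hxa
  rw [hP, hQ]
  constructor
  · linear_combination 2 * hxa'
  · linear_combination -hn' - b ^ 2 * h.sq

end Arithmetic

/-! ### Counting transitive subtournaments -/

section Counting

/-- In an asymmetric digraph, transitive subtournaments correspond to ordered tuples. -/
lemma transK_eq {V : Type} [Fintype V] [DecidableEq V] {edge : V → V → Prop}
    (has : ∀ x y, edge x y → ¬ edge y x) (m : ℕ) :
    transK edge m = {f : Fin m → V | ∀ i j, i < j → edge (f i) (f j)}.ncard := by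
  have hirr : ∀ x, ¬ edge x x := fun x h => has x x h h
  have hset : {s : Finset V | ∃ f : Fin m → V, Function.Injective f ∧
      s = Finset.image f Finset.univ ∧ ∀ i j : Fin m, i < j → edge (f i) (f j)} =
      (fun f : Fin m → V => Finset.image f Finset.univ) ''
        {f : Fin m → V | ∀ i j, i < j → edge (f i) (f j)} := by
    ext s
    constructor
    · rintro ⟨f, -, rfl, hf⟩
      exact ⟨f, hf, rfl⟩
    · rintro ⟨f, hf, rfl⟩
      refine ⟨f, ?_, rfl, hf⟩
      intro i j hij
      rcases lt_trichotomy i j with h | h | h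
      · have := hf i j h; rw [hij] at this; exact absurd this (hirr _)
      · exact h
      · have := hf j i h; rw [hij] at this; exact absurd this (hirr _)
  rw [transK, hset, Set.InjOn.ncard_image]
  intro f hf f' hf' himg
  have hex : ∀ i, ∃ j, f j = f' i := by
    intro i
    have : f' i ∈ Finset.image f Finset.univ := by
      have h := himg; simp only at h; rw [h]; exact mem_image_of_mem _ (mem_univ i)
    obtain ⟨j, -, hj⟩ := mem_image.1 this
    exact ⟨j, hj⟩
  choose σ hσ using hex
  have hmono : StrictMono σ := by
    intro i j hij
    have he := hf' i j hij
    rw [← hσ i, ← hσ j] at he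
    rcases lt_trichotomy (σ i) (σ j) with h | h | h
    · exact h
    · rw [h] at he; exact absurd he (hirr _)
    · exact absurd he (has _ _ (hf _ _ h))
  have hid : σ = id := by
    refine (hmono.range_inj strictMono_id).1 ?_
    rw [Set.range_id]
    exact (Finite.injective_iff_surjective.1 hmono.injective).range_eq
  funext i
  rw [← hσ i, hid]; rfl

variable {F : Type} [Field F] [Fintype F] [DecidableEq F]
variable {χ : MulChar F ℂ} {m : ℕ} {g : Fˣ}

open Classical in
/-- The indicator function of the nonzero fourth powers. -/
noncomputable def ind (z : F) : ℂ := if ∃ c : F, c ≠ 0 ∧ z = c ^ 4 then 1 else 0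

lemma ind_zero : ind (0 : F) = 0 := by
  rw [ind, if_neg]
  rintro ⟨c, hc, h⟩
  exact pow_ne_zero 4 hc h.symm

lemma ind_mul {s : F} (hs : s ≠ 0) (z : F) : ind (s ^ 4 * z) = ind z := by
  have : (∃ c : F, c ≠ 0 ∧ s ^ 4 * z = c ^ 4) ↔ ∃ c : F, c ≠ 0 ∧ z = c ^ 4 := by
    constructor
    · rintro ⟨c, hc, h⟩
      exact ⟨s⁻¹ * c, mul_ne_zero (inv_ne_zero hs) hc, by rw [mul_pow, ← h]; field_simp⟩
    · rintro ⟨c, hc, h⟩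
      exact ⟨s * c, mul_ne_zero hs hc, by rw [mul_pow, h]⟩
  simp only [ind, this]

lemma Quartic.ind_eq (h : Quartic χ m g) (z : F) :
    4 * ind z = ∑ k ∈ range 4, (χ ^ k) z := by
  by_cases hz : z = 0
  · subst hz
    simp [ind_zero, chpow_zero]
  · have h4 := apply_pow_four h.pow_four hz
    simp only [sum_range_succ, sum_range_zero, pow_apply_ne χ _ hz]
    by_cases h1 : χ z = 1
    · rw [ind, if_pos (h.isFourth h1), h1]; norm_num
    · rw [ind, if_neg]
      · have : (χ z - 1) * (1 + χ z + χ z ^ 2 + χ z ^ 3) = 0 := by linear_combination h4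
        have := (mul_eq_zero.1 this).resolve_left (sub_ne_zero.2 h1)
        linear_combination -this
      · rintro ⟨c, hc, rfl⟩
        exact h1 (by rw [map_pow, apply_pow_four h.pow_four hc])

lemma Quartic.sum_ind (h : Quartic χ m g) : 4 * ∑ z : F, ind z = (Fintype.card F : ℂ) - 1 := by
  rw [mul_sum]
  simp only [h.ind_eq]
  rw [sum_comm]
  simp only [sum_range_succ, sum_range_zero]
  rw [MulChar.sum_eq_zero_of_ne_one h.cube_ne_one, MulChar.sum_eq_zero_of_ne_one h.sq_ne_one,
    pow_zero, pow_one, MulChar.sum_eq_zero_of_ne_one h.ne_one, MulChar.sum_one_eq_card_units,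
    Fintype.card_units, Nat.cast_sub Fintype.card_pos]
  simp

lemma Quartic.asymm (h : Quartic χ m g) (a b : F) (hab : ∃ c : F, c ≠ 0 ∧ b - a = c ^ 4) :
    ¬ ∃ c : F, c ≠ 0 ∧ a - b = c ^ 4 := by
  rintro ⟨d, hd, hd'⟩
  obtain ⟨c, hc, hc'⟩ := hab
  have h1 : χ (a - b) = 1 := by rw [hd', map_pow, apply_pow_four h.pow_four hd]
  rw [← neg_sub b a, apply_neg_one_mul h.neg_one, hc', map_pow, apply_pow_four h.pow_four hc] at h1
  norm_num at h1

lemma count_translate :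
    ∑ a : F, ∑ b : F, ∑ c : F, ∑ d : F,
      ind (b - a) * ind (c - a) * ind (d - a) * ind (c - b) * ind (d - b) * ind (d - c) =
    Fintype.card F * ∑ b : F, ∑ c : F, ∑ d : F,
      ind b * ind c * ind d * ind (c - b) * ind (d - b) * ind (d - c) := by
  rw [← nsmul_eq_mul, ← card_univ, ← sum_const]
  refine sum_congr rfl fun a _ => ?_
  rw [← Equiv.sum_comp (Equiv.addRight a)]
  refine sum_congr rfl fun b _ => ?_
  rw [← Equiv.sum_comp (Equiv.addRight a)]
  refine sum_congr rfl fun c _ => ?_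
  rw [← Equiv.sum_comp (Equiv.addRight a)]
  refine sum_congr rfl fun d _ => ?_
  simp

/-- The number of ways to extend the edge `0 → 1` to a transitive subtournament. -/
noncomputable def extCount (F : Type) [Field F] [Fintype F] [DecidableEq F] : ℂ :=
  ∑ u : F, ∑ v : F, ind u * ind (u - 1) * ind v * ind (v - 1) * ind (v - u)

lemma count_scale :
    ∑ b : F, ∑ c : F, ∑ d : F,
      ind b * ind c * ind d * ind (c - b) * ind (d - b) * ind (d - c) =
    (∑ b : F, ind b) * extCount F := by
  rw [sum_mul]
  refine sum_congr rfl fun b _ => ?_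
  by_cases hb : ∃ s : F, s ≠ 0 ∧ b = s ^ 4
  · obtain ⟨s, hs, rfl⟩ := hb
    have hs4 : s ^ 4 ≠ 0 := pow_ne_zero 4 hs
    rw [extCount, mul_sum, ← Equiv.sum_comp (Equiv.mulLeft₀ (s ^ 4) hs4)]
    refine sum_congr rfl fun u _ => ?_
    rw [mul_sum, ← Equiv.sum_comp (Equiv.mulLeft₀ (s ^ 4) hs4)]
    refine sum_congr rfl fun v _ => ?_
    simp only [Equiv.mulLeft₀_apply]
    rw [show s ^ 4 * u - s ^ 4 = s ^ 4 * (u - 1) by ring,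
      show s ^ 4 * v - s ^ 4 = s ^ 4 * (v - 1) by ring, ← mul_sub]
    simp only [ind_mul hs]
    ring
  · simp [ind, hb]

lemma Quartic.extCount_eq (h : Quartic χ m g) :
    1024 * extCount F = ∑ a ∈ range 4, ∑ b ∈ range 4, ∑ c ∈ range 4, ∑ d ∈ range 4,
      ∑ e ∈ range 4, HS χ (a, b, c, d, e) := by
  have hterm : ∀ u v : F, 1024 * (ind u * ind (u - 1) * ind v * ind (v - 1) * ind (v - u)) =
      ∑ a ∈ range 4, ∑ b ∈ range 4, ∑ c ∈ range 4, ∑ d ∈ range 4, ∑ e ∈ range 4,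
        (χ ^ a) u * (χ ^ b) (u - 1) * (χ ^ c) v * (χ ^ d) (v - 1) * (χ ^ e) (v - u) := by
    intro u v
    calc _ = (4 * ind u) * (4 * ind (u - 1)) * (4 * ind v) * (4 * ind (v - 1)) *
          (4 * ind (v - u)) := by ring
      _ = _ := by
        simp only [h.ind_eq, ← mul_sum, ← sum_mul]
  rw [extCount, mul_sum]
  simp only [mul_sum (univ : Finset F), hterm, HS]
  simp only [sum_comm (s := (univ : Finset F)) (t := range 4)]

lemma Quartic.count_tuples (h : Quartic χ m g) :
    (transK (fun a b : F => ∃ c : F, c ≠ 0 ∧ b - a = c ^ 4) 4 : ℂ) =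
    ∑ a : F, ∑ b : F, ∑ c : F, ∑ d : F,
      ind (b - a) * ind (c - a) * ind (d - a) * ind (c - b) * ind (d - b) * ind (d - c) := by
  classical
  rw [transK_eq h.asymm]
  have hcard : {f : Fin 4 → F | ∀ i j, i < j → ∃ c : F, c ≠ 0 ∧ f j - f i = c ^ 4}.ncard =
      #(univ.filter fun x : F × F × F × F =>
        (∃ c : F, c ≠ 0 ∧ x.2.1 - x.1 = c ^ 4) ∧ (∃ c : F, c ≠ 0 ∧ x.2.2.1 - x.1 = c ^ 4) ∧
        (∃ c : F, c ≠ 0 ∧ x.2.2.2 - x.1 = c ^ 4) ∧ (∃ c : F, c ≠ 0 ∧ x.2.2.1 - x.2.1 = c ^ 4) ∧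
        (∃ c : F, c ≠ 0 ∧ x.2.2.2 - x.2.1 = c ^ 4) ∧
        (∃ c : F, c ≠ 0 ∧ x.2.2.2 - x.2.2.1 = c ^ 4)) := by
    rw [Set.ncard_eq_toFinset_card']
    refine card_nbij' (fun f => (f 0, f 1, f 2, f 3)) (fun x => ![x.1, x.2.1, x.2.2.1, x.2.2.2])
      ?_ ?_ ?_ ?_
    · intro f hf
      have hf : ∀ i j, i < j → ∃ c : F, c ≠ 0 ∧ f j - f i = c ^ 4 := by simpa using hf
      simp only [coe_filter, mem_univ, true_and, Set.mem_ofPred_eq]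
      exact ⟨hf 0 1 (by decide), hf 0 2 (by decide), hf 0 3 (by decide), hf 1 2 (by decide),
        hf 1 3 (by decide), hf 2 3 (by decide)⟩
    · intro x hx
      simp only [coe_filter, mem_univ, true_and, Set.mem_ofPred_eq] at hx
      obtain ⟨h1, h2, h3, h4, h5, h6⟩ := hx
      simp only [Set.coe_toFinset, Set.mem_ofPred_eq]
      intro i j hij
      fin_cases i <;> fin_cases j <;> first | exact absurd hij (by decide) | assumption
    · intro f _
      funext i
      fin_cases i <;> rfl
    · intro x _; rfl
  rw [hcard, card_filter, Fintype.sum_prod_type]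
  push_cast
  refine sum_congr rfl fun a _ => ?_
  rw [Fintype.sum_prod_type]
  refine sum_congr rfl fun b _ => ?_
  rw [Fintype.sum_prod_type]
  refine sum_congr rfl fun c _ => sum_congr rfl fun d _ => ?_
  simp only [ind, ite_and, mul_ite, mul_one, mul_zero]
  split_ifs <;> rfl

end Counting

end PaleyK4

theorem stmt_4 {F : Type} [Field F] [Fintype F] [DecidableEq F] (p r q : ℕ)
    (hp : p.Prime) (hq : q = p ^ r) (hcard : Fintype.card F = q) (hmod : q % 8 = 5)
    (x y : ℤ) (hxy : (q : ℤ) = x ^ 2 + y ^ 2) (hx : x % 4 = 1) (hpx : ¬ (p : ℤ) ∣ x)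
    (φ χ₄ : MulChar F ℂ) (hφ : orderOf φ = 2) (hχ₄ : orderOf χ₄ = 4) :
    (2 : ℂ) ^ 12 * (transK (fun a b : F => ∃ c : F, c ≠ 0 ∧ b - a = c ^ 4) 4 : ℕ) =
      (q : ℂ) * ((q : ℂ) - 1) *
        ((q : ℂ) ^ 2 + 2 * (q : ℂ) * (5 * (x : ℂ) - 21)
          + 24 * (x : ℂ) ^ 2 - 150 * (x : ℂ) + 241
          + 10 * ∑ a : F, ∑ b : F,
              χ₄ a * φ (1 - a) * φ b * φ (b - 1) * χ₄⁻¹ (a - b)) := by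
  subst hcard
  obtain ⟨m, g, h⟩ := PaleyK4.exists_quartic hχ₄ hmod
  obtain ⟨hsum, hprod⟩ := h.jacobi_sum_prod hp hq hmod hxy hx hpx
  have hS : ∑ a : F, ∑ b : F, χ₄ a * φ (1 - a) * φ b * φ (b - 1) * χ₄⁻¹ (a - b) =
      PaleyK4.HS χ₄ (2, 2, 1, 2, 3) := by
    simp only [PaleyK4.HS, h.unique_quadratic hφ, h.inv_eq]
    rw [Finset.sum_comm]
    refine Finset.sum_congr rfl fun b _ => Finset.sum_congr rfl fun a _ => ?_
    rw [← neg_sub a 1, h.quadData.neg, pow_one]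
    ring
  have hN := h.extCount_eq.trans h.jacobiData.total
  simp only [PaleyK4.Quad.eval, h.W_eq] at hN
  rw [h.count_tuples, PaleyK4.count_translate, PaleyK4.count_scale, hS]
  have hI := h.sum_ind
  generalize jacobiSum χ₄ χ₄ = P at *
  generalize jacobiSum (χ₄ ^ 3) (χ₄ ^ 3) = Q at *
  generalize PaleyK4.HS χ₄ (2, 2, 1, 2, 3) = S at *
  generalize ∑ z : F, PaleyK4.ind z = s at *
  generalize (Fintype.card F : ℂ) = n at *
  linear_combination n * 1024 * PaleyK4.extCount F * hI + n * (n - 1) * hN +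
    n * (n - 1) * ((75 - 5 * n + 6 * (P + Q - 2 * x)) * hsum - 8 * hprod)
end

section
/- Let q ≡ 3 (mod 4) be a prime power. Then 2^3 · K_3(G_2(q)) = q(q−1)(q−3), where G_2(q) is the Paley tournament (the 2nd power Paley digraph) of order q. -/
open Finset in
/-- Transitive triples of a tournament of constant out-degree `d`, counted by their source. -/
lemma transK_three {V : Type} [DecidableEq V] [Fintype V] (edge : V → V → Prop)
    [DecidableRel edge] (hasymm : ∀ a b, edge a b → ¬ edge b a)
    (htotal : ∀ a b, a ≠ b → edge a b ∨ edge b a) (d : ℕ)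
    (hd : ∀ a, (univ.filter (edge a)).card = d) :
    transK edge 3 = Fintype.card V * d.choose 2 := by
  have hirr : ∀ a, ¬ edge a a := fun a h => hasymm a a h h
  let S : Finset (Σ _ : V, Finset V) :=
    univ.sigma fun a => powersetCard 2 (univ.filter (edge a))
  have hS : S.card = Fintype.card V * d.choose 2 := by
    simp [S, card_sigma, card_powersetCard, hd]
  have hmem : ∀ p : Σ _ : V, Finset V, p ∈ S → ∀ x ∈ p.2, edge p.1 x := by
    intro p hp x hx
    simp only [S, mem_sigma, mem_powersetCard] at hp
    simpa using hp.2.1 hx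
  have hinj : Set.InjOn (fun p : Σ _ : V, Finset V => insert p.1 p.2) (S : Set _) := by
    rintro ⟨a, t⟩ hp ⟨b, u⟩ hp' h
    have h1 := hmem _ hp
    have h2 := hmem _ hp'
    simp only at h h1 h2
    -- distinct sources of the same triple would dominate each other
    have hab : a = b := by
      by_contra hne
      have hb : b ∈ insert a t := h ▸ mem_insert_self b u
      have ha : a ∈ insert b u := h ▸ mem_insert_self a t
      exact hasymm a b (h1 b ((mem_insert.1 hb).resolve_left (Ne.symm hne)))
        (h2 a ((mem_insert.1 ha).resolve_left hne))
    subst hab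
    have hat : a ∉ t := fun h => hirr a (h1 a h)
    have hau : a ∉ u := fun h => hirr a (h2 a h)
    have : t = u := by rw [← erase_insert hat, h, erase_insert hau]
    rw [this]
  rw [← hS, ← card_image_of_injOn hinj, ← Set.ncard_coe_finset, transK]
  congr 1
  ext s
  simp only [Set.mem_ofPred_eq, coe_image, Set.mem_image, mem_coe]
  constructor
  · rintro ⟨f, hf, rfl, he⟩
    refine ⟨⟨f 0, {f 1, f 2}⟩, ?_, ?_⟩
    · simp only [S, mem_sigma, mem_univ, true_and, mem_powersetCard]
      refine ⟨?_, card_pair (hf.ne (by decide))⟩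
      intro x hx
      rcases mem_insert.1 hx with rfl | hx
      · simpa using he 0 1 (by decide)
      · rw [mem_singleton.1 hx]
        simpa using he 0 2 (by decide)
    · ext x
      simp [Fin.exists_fin_succ, eq_comm]
  · rintro ⟨⟨a, t⟩, hp, rfl⟩
    have h1 := hmem _ hp
    simp only [S, mem_sigma, mem_univ, true_and, mem_powersetCard] at hp
    obtain ⟨x, y, hxy, ht⟩ := card_eq_two.1 hp.2
    simp only at h1
    -- three vertices with all arcs pointing forward are automatically distinct
    have key : ∀ x y, edge a x → edge a y → edge x y →
        ∃ f : Fin 3 → V, Function.Injective f ∧ insert a {x, y} = image f univ ∧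
          ∀ i j : Fin 3, i < j → edge (f i) (f j) := by
      intro x y hx hy hxy
      have e : ∀ i j : Fin 3, i < j → edge (![a, x, y] i) (![a, x, y] j) := by
        intro i j hij
        fin_cases i <;> fin_cases j <;> simp_all
      refine ⟨![a, x, y], ?_, ?_, e⟩
      · intro i j hij
        by_contra hne
        rcases lt_or_gt_of_ne hne with h | h
        · have := e i j h
          rw [hij] at this
          exact hirr _ this
        · have := e j i h
          rw [hij] at this
          exact hirr _ this
      · ext z
        simp [Fin.exists_fin_succ, eq_comm]
    subst ht
    have hx := h1 x (by simp)
    have hy := h1 y (by simp)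
    rcases htotal x y hxy with h | h
    · exact key x y hx hy h
    · simpa only [pair_comm] using key y x hy hx h

lemma quadraticChar_neg_of_card {F : Type} [Field F] [Fintype F] [DecidableEq F]
    (hmod : Fintype.card F % 4 = 3) (x : F) : quadraticChar F (-x) = -quadraticChar F x := by
  have h : quadraticChar F (-1) = -1 := by
    rw [quadraticChar_neg_one_iff_not_isSquare, FiniteField.isSquare_neg_one_iff]
    simp [hmod]
  rw [← neg_one_mul, map_mul, h, neg_one_mul]

lemma paley_edge_iff {F : Type} [Field F] [Fintype F] [DecidableEq F] (a b : F) :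
    (∃ c : F, c ≠ 0 ∧ b - a = c ^ 2) ↔ quadraticChar F (b - a) = 1 := by
  constructor
  · rintro ⟨c, hc, h⟩
    rw [h, quadraticChar_sq_one' hc]
  · intro h
    have h0 : b - a ≠ 0 := by
      intro h0
      simp [h0] at h
    obtain ⟨c, hc⟩ := (quadraticChar_one_iff_isSquare h0).1 h
    refine ⟨c, ?_, by rw [hc, sq]⟩
    rintro rfl
    simp [hc] at h0

open Finset in
lemma two_mul_card_out {F : Type} [Field F] [Fintype F] [DecidableEq F]
    (hmod : Fintype.card F % 4 = 3) (a : F) :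
    2 * (univ.filter fun b => quadraticChar F (b - a) = 1).card + 1 = Fintype.card F := by
  have hrefl : (univ.filter fun b => quadraticChar F (b - a) = 1).card =
      (univ.filter fun b => quadraticChar F (b - a) = -1).card := by
    refine card_bij' (fun b _ => 2 * a - b) (fun b _ => 2 * a - b) ?_ ?_ ?_ ?_
    · intro b hb
      simp only [mem_filter, mem_univ, true_and] at hb ⊢
      rw [show 2 * a - b - a = -(b - a) by ring, quadraticChar_neg_of_card hmod, hb]
    · intro b hb
      simp only [mem_filter, mem_univ, true_and] at hb ⊢
      rw [show 2 * a - b - a = -(b - a) by ring, quadraticChar_neg_of_card hmod, hb, neg_neg]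
    · intro b _
      ring
    · intro b _
      ring
  have hdisj : Disjoint (univ.filter fun b => quadraticChar F (b - a) = 1)
      (univ.filter fun b => quadraticChar F (b - a) = -1) := by
    rw [disjoint_filter]
    intro b _ h h'
    rw [h] at h'
    norm_num at h'
  have hunion : (univ.filter fun b => quadraticChar F (b - a) = 1) ∪
      (univ.filter fun b => quadraticChar F (b - a) = -1) = univ.erase a := by
    ext b
    simp only [mem_union, mem_filter, mem_univ, true_and, mem_erase, and_true]
    constructor
    · rintro h rfl
      simp at h
    · intro h
      exact quadraticChar_dichotomy (sub_ne_zero.2 h)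
  have hcard := card_union_of_disjoint hdisj
  rw [hunion, card_erase_of_mem (mem_univ a), card_univ, ← hrefl] at hcard
  have := Fintype.card_pos_iff.2 ⟨a⟩
  omega

theorem stmt_5 {F : Type} [Field F] [Fintype F] [DecidableEq F] (q : ℕ)
    (hq : Fintype.card F = q) (hmod : q % 4 = 3) :
    (2 ^ 3 * (transK (fun a b : F => ∃ c : F, c ≠ 0 ∧ b - a = c ^ 2) 3) : ℤ) =
      (q : ℤ) * ((q : ℤ) - 1) * ((q : ℤ) - 3) := by
  subst hq
  have hneg : ∀ a b : F, quadraticChar F (a - b) = -quadraticChar F (b - a) := fun a b => by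
    rw [← quadraticChar_neg_of_card hmod, neg_sub]
  simp only [paley_edge_iff]
  obtain ⟨k, hk⟩ : ∃ k, Fintype.card F = 4 * k + 3 := ⟨Fintype.card F / 4, by omega⟩
  rw [transK_three (fun a b : F => quadraticChar F (b - a) = 1) ?_ ?_ (2 * k + 1) ?_]
  · have hc : (2 * k + 1).choose 2 = (2 * k + 1) * k := by
      rw [Nat.choose_two_right, Nat.add_sub_cancel, mul_left_comm]
      exact Nat.mul_div_cancel_left _ two_pos
    rw [hc, hk]
    push_cast
    ring
  · intro a b h h'
    rw [hneg, h] at h'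
    norm_num at h'
  · intro a b h
    rw [hneg a b, neg_eq_iff_eq_neg]
    exact quadraticChar_dichotomy (sub_ne_zero.2 h.symm)
  · intro a
    have := two_mul_card_out hmod a
    omega
end

section
/- Let q = p^r ≡ 5 (mod 8) for a prime p, and write q = x^2 + y^2 with integers x, y such that x ≡ 1 (mod 4) and p ∤ x. Then 2^6 · K_3(G_4(q)) = q(q−1)(q + 2x − 7), as an identity of integers. -/
open Finset

/-! ### Fourth powers and quartic characters -/

/-- The nonzero fourth powers of `F`, i.e. the connection set of the Paley digraph. -/
def Quartic {F : Type} [Field F] (t : F) : Prop := ∃ c : F, c ≠ 0 ∧ t = c ^ 4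

/-- A character cutting out exactly the nonzero fourth powers, i.e. (when `q ≡ 1 (mod 4)`) one of
exact order four. Stating this through values avoids fixing a root of unity in `R`. -/
def IsQuarticChar {F R : Type} [Field F] [CommRing R] (χ : MulChar F R) : Prop :=
  ∀ t : F, t ≠ 0 → (χ t = 1 ↔ Quartic t)

section Field

variable {F : Type} [Field F] [Fintype F]

lemma two_ne_zero_of_card (hq : Fintype.card F % 8 = 5) : (2 : F) ≠ 0 := by
  refine Ring.two_ne_zero (fun h => ?_)
  have := FiniteField.even_card_of_char_two h
  omega

lemma not_quartic_neg_one (hq : Fintype.card F % 8 = 5) : ¬ Quartic (-1 : F) := by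
  rintro ⟨c, hc, h⟩
  -- `q - 1` is an odd multiple of `4`, so `c ^ 4 = -1` would give `c ^ (q - 1) = -1`.
  have h1 := FiniteField.pow_card_sub_one_eq_one c hc
  obtain ⟨m, hm⟩ : ∃ m, Fintype.card F - 1 = 4 * (2 * m + 1) := ⟨Fintype.card F / 8, by omega⟩
  rw [hm, pow_mul, ← h, Odd.neg_one_pow ⟨m, rfl⟩] at h1
  apply two_ne_zero_of_card hq
  linear_combination -h1

/-- With `i ^ 2 = -1` one has `(1 + i) ^ 4 = -4`. -/
lemma quartic_neg_four (hq : Fintype.card F % 8 = 5) : Quartic (-4 : F) := by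
  obtain ⟨i, hi⟩ := (FiniteField.isSquare_neg_one_iff (F := F)).2 (by omega)
  refine ⟨1 + i, fun h => two_ne_zero_of_card hq ?_, ?_⟩
  · linear_combination (1 - i) * h - hi
  · linear_combination (i * i + 4 * i + 5) * hi

lemma quartic_sq_iff (hq : Fintype.card F % 8 = 5) {v : F} (hv : v ≠ 0) :
    Quartic (v ^ 2) ↔ IsSquare v := by
  constructor
  · rintro ⟨c, hc, h⟩
    obtain ⟨i, hi⟩ := (FiniteField.isSquare_neg_one_iff (F := F)).2 (by omega)
    have : (v - c ^ 2) * (v + c ^ 2) = 0 := by linear_combination h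
    rcases mul_eq_zero.1 this with h | h
    · exact ⟨c, by linear_combination h⟩
    · exact ⟨i * c, by linear_combination h + c ^ 2 * hi⟩
  · rintro ⟨c, rfl⟩
    exact ⟨c, by rintro rfl; simp at hv, by ring⟩

omit [Fintype F] in
lemma Quartic.ne_zero {t : F} (h : Quartic t) : t ≠ 0 := by
  obtain ⟨c, hc, rfl⟩ := h
  positivity

variable {R : Type} [CommRing R] [IsDomain R] {χ : MulChar F R}

namespace IsQuarticChar

omit [Fintype F] [IsDomain R] in
lemma pow_four (h : IsQuarticChar χ) {t : F} (ht : t ≠ 0) : χ t ^ 4 = 1 := by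
  rw [← map_pow]
  exact (h _ (pow_ne_zero _ ht)).2 ⟨t, ht, rfl⟩

omit [Fintype F] [IsDomain R] in
lemma pow_four_eq_one (h : IsQuarticChar χ) : χ ^ 4 = 1 := by
  refine MulChar.eq_one_iff.2 fun a => ?_
  rw [MulChar.pow_apply_coe]
  exact h.pow_four a.ne_zero

lemma map_neg_one (h : IsQuarticChar χ) (hq : Fintype.card F % 8 = 5) : χ (-1) = -1 := by
  have h1 : χ (-1) ^ 2 = 1 := by rw [← map_pow]; simp
  rcases mul_self_eq_one_iff.1 ((sq _).symm.trans h1) with h2 | h2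
  · exact absurd ((h _ (by simp)).1 h2) (not_quartic_neg_one hq)
  · exact h2

lemma map_four (h : IsQuarticChar χ) (hq : Fintype.card F % 8 = 5) : χ 4 = -1 := by
  have h4 := quartic_neg_four hq
  have h1 := (h _ h4.ne_zero).2 h4
  have : (4 : F) = (-1) * (-4) := by ring
  rw [this, map_mul, h1, h.map_neg_one hq, mul_one]

lemma map_sq_eq_quadraticChar [DecidableEq F] (h : IsQuarticChar χ)
    (hq : Fintype.card F % 8 = 5) (v : F) : (χ ^ 2) v = (quadraticChar F v : R) := by
  rw [MulChar.pow_apply' _ two_ne_zero]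
  rcases eq_or_ne v 0 with rfl | hv
  · simp [MulChar.map_zero]
  have hs := h (v ^ 2) (pow_ne_zero _ hv)
  rw [quartic_sq_iff hq hv, map_pow] at hs
  by_cases hv2 : IsSquare v
  · rw [hs.2 hv2, (quadraticChar_one_iff_isSquare hv).2 hv2]; simp
  · rw [quadraticChar_neg_one_iff_not_isSquare.2 hv2]
    have h4 : (χ v ^ 2 - 1) * (χ v ^ 2 + 1) = 0 := by linear_combination h.pow_four hv
    rcases mul_eq_zero.1 h4 with h5 | h5
    · exact absurd (hs.1 (sub_eq_zero.1 h5)) hv2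
    · push_cast; linear_combination h5

omit [IsDomain R] in
lemma ne_one (h : IsQuarticChar χ) (hq : Fintype.card F % 8 = 5) : χ ≠ 1 := by
  rintro rfl
  exact not_quartic_neg_one hq ((h _ (by simp)).1 (MulChar.one_apply (by simp)))

omit [Fintype F] [IsDomain R] in
/-- The conjugate `χ³` of a quartic character is quartic. -/
lemma cube (h : IsQuarticChar χ) : IsQuarticChar (χ ^ 3) := by
  intro t ht
  rw [← h t ht, MulChar.pow_apply' _ three_ne_zero]
  have h4 := h.pow_four ht
  constructor
  · intro h3; linear_combination h4 - χ t * h3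
  · intro h1; rw [h1, one_pow]

omit [Fintype F] [IsDomain R] in
lemma cube_eq_inv (h : IsQuarticChar χ) : χ ^ 3 = χ⁻¹ := by
  rw [eq_inv_iff_mul_eq_one, ← pow_succ, h.pow_four_eq_one]

omit [Fintype F] [IsDomain R] in
lemma cube_sq (h : IsQuarticChar χ) : (χ ^ 3) ^ 2 = χ ^ 2 := by
  rw [← pow_mul, show 3 * 2 = 4 + 2 by norm_num, pow_add, h.pow_four_eq_one, one_mul]

omit [Fintype F] [IsDomain R] in
lemma sq_inv (h : IsQuarticChar χ) : (χ ^ 2)⁻¹ = χ ^ 2 := by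
  rw [inv_eq_iff_mul_eq_one, ← pow_add, h.pow_four_eq_one]

lemma sq_ne_one (h : IsQuarticChar χ) (hq : Fintype.card F % 8 = 5) : χ ^ 2 ≠ 1 := by
  intro h2
  have h3 : (χ ^ 2) 2 = 1 := by
    rw [h2]; exact MulChar.one_apply (two_ne_zero_of_card hq).isUnit
  rw [MulChar.pow_apply' _ two_ne_zero, ← map_pow, show (2 : F) ^ 2 = 4 by norm_num] at h3
  have h4 : (4 : F) ≠ 0 := by
    rw [show (4 : F) = 2 * 2 by norm_num]
    exact mul_ne_zero (two_ne_zero_of_card hq) (two_ne_zero_of_card hq)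
  have h5 : χ (-1) = 1 := by rw [h.map_neg_one hq, ← h.map_four hq, h3]
  exact not_quartic_neg_one hq ((h _ (by simp)).1 h5)

/-- The duplication formula `J(χ, χ) = χ(4)⁻¹ J(χ, χ²)`, where `χ(4) = -1`. It comes from completing
the square in `4 t (1 - t) = 1 - (1 - 2 t) ^ 2`. -/
lemma jacobiSum_self (h : IsQuarticChar χ) (hq : Fintype.card F % 8 = 5) :
    jacobiSum χ χ = -jacobiSum χ (χ ^ 2) := by
  classical
  have h2 := two_ne_zero_of_card hq
  have hchar : ringChar F ≠ 2 := fun hc => by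
    have := FiniteField.even_card_of_char_two hc
    omega
  have key : χ 4 * jacobiSum χ χ = jacobiSum χ (χ ^ 2) := calc
    χ 4 * jacobiSum χ χ = ∑ t : F, χ (1 - (1 - 2 * t) ^ 2) := by
      rw [jacobiSum, mul_sum]
      refine sum_congr rfl fun t _ => ?_
      rw [← map_mul, ← map_mul]
      congr 1
      ring
    _ = ∑ u : F, χ (1 - u ^ 2) :=
      ((Equiv.mulLeft₀ (2 : F) h2).trans (Equiv.subLeft 1)).sum_comp (fun u => χ (1 - u ^ 2))
    _ = ∑ v : F, ∑ u : F with u ^ 2 = v, χ (1 - u ^ 2) :=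
      (sum_fiberwise univ (fun u : F => u ^ 2) _).symm
    _ = ∑ v : F, ((χ ^ 2) v + 1) * χ (1 - v) := by
      refine sum_congr rfl fun v _ => ?_
      rw [sum_congr rfl (g := fun _ => χ (1 - v)) (by simp +contextual), sum_const,
        nsmul_eq_mul, h.map_sq_eq_quadraticChar hq]
      congr 1
      have := quadraticChar_card_sqrts hchar v
      rw [Set.toFinset_ofPred] at this
      exact_mod_cast congrArg (Int.cast : ℤ → R) this
    _ = jacobiSum χ (χ ^ 2) := by
      rw [jacobiSum_comm, jacobiSum]
      simp only [add_mul, one_mul, sum_add_distrib]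
      rw [show ∑ x : F, χ (1 - x) = ∑ x, χ x from (Equiv.subLeft (1 : F)).sum_comp χ,
        MulChar.sum_eq_zero_of_ne_one (h.ne_one hq),
        add_zero]
  rw [h.map_four hq] at key
  linear_combination -key

omit [Fintype F] in
open Classical in
/-- Orthogonality: the powers of `χ` sum to four times the indicator of the fourth powers. -/
lemma sum_powers (h : IsQuarticChar χ) (t : F) :
    (1 : MulChar F R) t + χ t + (χ ^ 2) t + (χ ^ 3) t = if Quartic t then 4 else 0 := by
  rcases eq_or_ne t 0 with rfl | ht
  · rw [if_neg fun h => h.ne_zero rfl]; simp [MulChar.map_zero]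
  rw [MulChar.one_apply ht.isUnit, MulChar.pow_apply' _ two_ne_zero,
    MulChar.pow_apply' _ three_ne_zero]
  split_ifs with hQ
  · rw [(h t ht).2 hQ]; ring
  · have h1 : χ t - 1 ≠ 0 := fun h1 => hQ ((h t ht).1 (sub_eq_zero.1 h1))
    refine (mul_eq_zero.1 (?_ : (χ t - 1) * _ = 0)).resolve_left h1
    linear_combination h.pow_four ht

open Classical in
/-- The number of `t` with `t` and `1 - t` both fourth powers, in terms of a Jacobi sum of `χ` and
that of the conjugate character `χ³`. -/
lemma sixteen_mul_card (h : IsQuarticChar χ) (hq : Fintype.card F % 8 = 5) :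
    (16 * #{t : F | Quartic t ∧ Quartic (1 - t)} : R) =
      Fintype.card F - 7 + (jacobiSum χ (χ ^ 2) + jacobiSum (χ ^ 3) (χ ^ 2)) := by
  have e : (16 * #{t : F | Quartic t ∧ Quartic (1 - t)} : R) =
      ∑ t : F, ((1 : MulChar F R) t + χ t + (χ ^ 2) t + (χ ^ 3) t) *
        ((1 : MulChar F R) (1 - t) + χ (1 - t) + (χ ^ 2) (1 - t) + (χ ^ 3) (1 - t)) := by
    simp only [h.sum_powers, ite_mul, mul_ite, zero_mul, mul_zero, ← ite_and]
    rw [← sum_filter, sum_const, nsmul_eq_mul]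
    simp only [and_comm]
    ring
  have h1 := h.jacobiSum_self hq
  have h3 := h.cube.jacobiSum_self hq
  rw [h.cube_sq] at h3
  have h13 : jacobiSum χ (χ ^ 3) = 1 := by
    rw [h.cube_eq_inv, jacobiSum_nontrivial_inv (h.ne_one hq), h.map_neg_one hq, neg_neg]
  have h22 : jacobiSum (χ ^ 2) (χ ^ 2) = -1 := by
    have := jacobiSum_nontrivial_inv (h.sq_ne_one hq)
    rw [h.sq_inv, MulChar.pow_apply' _ two_ne_zero, h.map_neg_one hq] at this
    rw [this]; ring
  have j1 := jacobiSum_one_nontrivial (h.ne_one hq)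
  have j2 := jacobiSum_one_nontrivial (h.sq_ne_one hq)
  have j3 := jacobiSum_one_nontrivial (h.cube.ne_one hq)
  have j0 := jacobiSum_one_one (F := F) (R := R)
  have c1 := jacobiSum_comm χ 1
  have c2 := jacobiSum_comm (χ ^ 2) 1
  have c3 := jacobiSum_comm (χ ^ 3) 1
  have c4 := jacobiSum_comm (χ ^ 3) χ
  have c5 := jacobiSum_comm (χ ^ 2) χ
  have c6 := jacobiSum_comm (χ ^ 2) (χ ^ 3)
  rw [e]
  simp only [add_mul, mul_add, sum_add_distrib]
  change jacobiSum 1 1 + jacobiSum χ 1 + jacobiSum (χ ^ 2) 1 + jacobiSum (χ ^ 3) 1 +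
    (jacobiSum 1 χ + jacobiSum χ χ + jacobiSum (χ ^ 2) χ + jacobiSum (χ ^ 3) χ) +
    (jacobiSum 1 (χ ^ 2) + jacobiSum χ (χ ^ 2) + jacobiSum (χ ^ 2) (χ ^ 2) +
      jacobiSum (χ ^ 3) (χ ^ 2)) +
    (jacobiSum 1 (χ ^ 3) + jacobiSum χ (χ ^ 3) + jacobiSum (χ ^ 2) (χ ^ 3) +
      jacobiSum (χ ^ 3) (χ ^ 3)) = _
  rw [c1, c2, c3, c4, c5, c6, j0, j1, j2, j3, h13, h22, h1, h3]
  ring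

end IsQuarticChar
end Field

/-! ### Quartic characters over the Gaussian integers and over the field itself -/

section Existence

variable {F : Type} [Field F] [Fintype F] {R : Type} [CommRing R]

lemma isQuarticChar_of_generator {χ : MulChar F R} {g : Fˣ}
    (hg : ∀ u : Fˣ, u ∈ Subgroup.zpowers g) (ho : orderOf (χ g) = 4) : IsQuarticChar χ := by
  have hpow : ∀ u : Fˣ, ∃ m : ℕ, u = g ^ m := fun u => by
    obtain ⟨m, hm⟩ := (mem_powers_iff_mem_zpowers (x := g) (y := u)).2 (hg u)
    exact ⟨m, hm.symm⟩
  intro t ht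
  constructor
  · intro h
    obtain ⟨m, hm⟩ := hpow (Units.mk0 t ht)
    have hm' : t = (g : F) ^ m := by simpa using congrArg Units.val hm
    rw [hm', map_pow] at h
    obtain ⟨n, rfl⟩ := ho ▸ orderOf_dvd_of_pow_eq_one h
    exact ⟨(g : F) ^ n, by simp, by rw [hm', ← pow_mul, mul_comm]⟩
  · rintro ⟨c, hc, rfl⟩
    obtain ⟨m, hm⟩ := hpow (Units.mk0 c hc)
    have hm' : c = (g : F) ^ m := by simpa using congrArg Units.val hm
    rw [hm', ← pow_mul, mul_comm, pow_mul, map_pow, map_pow, ← ho, pow_orderOf_eq_one, one_pow]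

lemma exists_isQuarticChar_gaussianInt (hq : Fintype.card F % 8 = 5) :
    ∃ χ : MulChar F GaussianInt, IsQuarticChar χ := by
  classical
  have hζ : IsPrimitiveRoot (⟨0, 1⟩ : GaussianInt) 4 := by
    rw [IsPrimitiveRoot.iff (by norm_num)]
    refine ⟨by decide, fun l h0 hl => ?_⟩
    interval_cases l <;> decide
  obtain ⟨χ, hχ⟩ := MulChar.exists_mulChar_orderOf F (n := 4) (by omega) hζ
  obtain ⟨g, hg⟩ := IsCyclic.exists_generator (α := Fˣ)
  refine ⟨χ, isQuarticChar_of_generator hg ?_⟩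
  rw [orderOf_eq_iff (by norm_num)]
  have key : ∀ m : ℕ, χ g ^ m = 1 → χ ^ m = 1 := by
    intro m h
    refine MulChar.eq_one_iff.2 fun u => ?_
    obtain ⟨n, rfl⟩ := (mem_powers_iff_mem_zpowers (x := g) (y := u)).2 (hg u)
    rw [MulChar.pow_apply_coe]
    simp only [Units.val_pow_eq_pow_val, map_pow]
    rw [← pow_mul, mul_comm, pow_mul, h, one_pow]
  refine ⟨?_, fun m hm h0 h => ?_⟩
  · rw [← MulChar.pow_apply_coe, ← hχ, pow_orderOf_eq_one, MulChar.one_apply_coe]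
  · have := Nat.le_of_dvd h0 (hχ ▸ orderOf_dvd_of_pow_eq_one (key m h))
    omega

/-- The reduction of a quartic character modulo the characteristic: `t ↦ t ^ k`, used with
`4 * k = q - 1`. -/
def powChar (F : Type) [Field F] (k : ℕ) (hk : k ≠ 0) : MulChar F F where
  toFun t := t ^ k
  map_one' := one_pow k
  map_mul' a b := mul_pow a b k
  map_nonunit' a ha := by
    rw [isUnit_iff_ne_zero, not_not] at ha
    simp [ha, hk]

omit [Fintype F] in
lemma powChar_apply (k : ℕ) (hk : k ≠ 0) (t : F) : powChar F k hk t = t ^ k := rfl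

lemma isQuarticChar_powChar {k : ℕ} (hk : k ≠ 0) (hkq : 4 * k + 1 = Fintype.card F) :
    IsQuarticChar (powChar F k hk) := by
  classical
  obtain ⟨g, hg⟩ := IsCyclic.exists_generator (α := Fˣ)
  refine isQuarticChar_of_generator hg ?_
  rw [powChar_apply, orderOf_pow_of_dvd hk, orderOf_units, orderOf_eq_card_of_forall_mem_zpowers hg,
    Nat.card_eq_fintype_card, Fintype.card_units, ← hkq]
  · simp [Nat.pos_of_ne_zero hk]
  · rw [orderOf_units, orderOf_eq_card_of_forall_mem_zpowers hg,
      Nat.card_eq_fintype_card, Fintype.card_units, ← hkq]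
    simp

lemma sum_pow_of_pos {i : ℕ} (hi : 0 < i) :
    ∑ t : F, t ^ i = if Fintype.card F - 1 ∣ i then -1 else 0 := by
  classical
  rw [← FiniteField.sum_pow_units F i, ← sum_subset (subset_univ (univ.erase (0 : F)))]
  · symm
    refine sum_bij (fun u _ => (u : F)) (by simp) (fun a _ b _ h => Units.ext h) ?_ (by simp)
    intro b hb
    exact ⟨Units.mk0 b (by simpa using hb), mem_univ _, rfl⟩
  · intro x _ hx
    have : x = 0 := by simpa using hx
    rw [this, zero_pow hi.ne']

/-- Beta-type sums over `F` pick out a single binomial coefficient. -/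
lemma sum_pow_mul_one_sub_pow {m n : ℕ} (hm : 0 < m) :
    ∑ t : F, t ^ m * (1 - t) ^ n = ∑ j ∈ range (n + 1),
      (-1) ^ j * (n.choose j : F) * (if Fintype.card F - 1 ∣ m + j then -1 else 0) := by
  have : ∀ t : F, t ^ m * (1 - t) ^ n =
      ∑ j ∈ range (n + 1), (-1) ^ j * (n.choose j : F) * t ^ (m + j) := by
    intro t
    rw [show 1 - t = -t + 1 by ring, add_pow, mul_sum]
    refine sum_congr rfl fun j _ => ?_
    rw [neg_pow, pow_add]
    ring
  simp only [this]
  rw [sum_comm]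
  refine sum_congr rfl fun j _ => ?_
  rw [← mul_sum, sum_pow_of_pos (by omega)]

/-- Modulo the characteristic the two conjugate Jacobi sums add up to `±binom (2k) k`. -/
lemma jacobiSum_powChar {k : ℕ} (hk : k ≠ 0) (hkq : 4 * k + 1 = Fintype.card F) :
    jacobiSum (powChar F k hk) (powChar F k hk ^ 2) +
      jacobiSum (powChar F k hk ^ 3) (powChar F k hk ^ 2) = -(-1) ^ k * ((2 * k).choose k : F) := by
  have hq : Fintype.card F - 1 = 4 * k := by omega
  have e1 : jacobiSum (powChar F k hk) (powChar F k hk ^ 2) =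
      ∑ t : F, t ^ k * (1 - t) ^ (2 * k) := by
    simp only [jacobiSum, MulChar.pow_apply' _ two_ne_zero, powChar_apply, ← pow_mul,
      mul_comm k]
  have e2 : jacobiSum (powChar F k hk ^ 3) (powChar F k hk ^ 2) =
      ∑ t : F, t ^ (3 * k) * (1 - t) ^ (2 * k) := by
    simp only [jacobiSum, MulChar.pow_apply' _ two_ne_zero, MulChar.pow_apply' _ three_ne_zero,
      powChar_apply, ← pow_mul, mul_comm k]
  rw [e1, e2, sum_pow_mul_one_sub_pow (by omega), sum_pow_mul_one_sub_pow (by omega), hq]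
  rw [sum_eq_zero, zero_add, sum_eq_single k]
  · rw [if_pos ⟨1, by ring⟩]; ring
  · intro j hj hjk
    rw [mem_range] at hj
    rw [if_neg, mul_zero]
    rintro ⟨c, hc⟩
    rcases c with _ | _ | c
    · omega
    · omega
    · have : 4 * k * (c + 1 + 1) = 4 * k * c + 8 * k := by ring
      omega
  · exact fun h => absurd (mem_range.2 (by omega)) h
  · intro j hj
    rw [mem_range] at hj
    rw [if_neg, mul_zero]
    intro hd
    have := Nat.le_of_dvd (by omega) hd
    omega

end Existence

/-- By the theorem of Lucas: all base-`p` digits of `k = (p ^ r - 1) / 4` equal `(p - 1) / 4`, so that no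
carry occurs in `k + k`. -/
lemma not_dvd_choose {p m : ℕ} (hp : p.Prime) (hm : p = 4 * m + 1) (r : ℕ) :
    ∀ k : ℕ, 4 * k + 1 = p ^ r → ¬ p ∣ (2 * k).choose k := by
  have := Fact.mk hp
  induction r with
  | zero =>
    intro k hk
    have : k = 0 := by simpa using hk
    simp [this, hp.ne_one]
  | succ r ih =>
    intro k hk
    obtain ⟨l, hl⟩ : ∃ l, 4 * l + 1 = p ^ r := by
      have : p ^ r % 4 = 1 := by
        rw [Nat.pow_mod, hm, show (4 * m + 1) % 4 = 1 by omega, one_pow, Nat.one_mod]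
      exact ⟨p ^ r / 4, by omega⟩
    have hkl : k = m + p * l := by
      have : 4 * k + 1 = (4 * l + 1) * p := by rw [hk, hl, pow_succ]
      have h2 : (4 * l + 1) * p = 4 * (p * l) + p := by ring
      omega
    have hk2 : 2 * k = 2 * m + p * (2 * l) := by rw [hkl]; ring
    have hlucas := Choose.choose_modEq_choose_mod_mul_choose_div_nat (p := p) (n := 2 * k) (k := k)
    have m1 : k % p = m := by rw [hkl, Nat.add_mul_mod_self_left, Nat.mod_eq_of_lt (by omega)]
    have d1 : k / p = l := by
      rw [hkl, Nat.add_mul_div_left _ _ hp.pos, Nat.div_eq_of_lt (by omega), zero_add]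
    have m2 : 2 * k % p = 2 * m := by
      rw [hk2, Nat.add_mul_mod_self_left, Nat.mod_eq_of_lt (by omega)]
    have d2 : 2 * k / p = 2 * l := by
      rw [hk2, Nat.add_mul_div_left _ _ hp.pos, Nat.div_eq_of_lt (by omega), zero_add]
    rw [m1, d1, m2, d2] at hlucas
    rw [hlucas.dvd_iff dvd_rfl, hp.dvd_mul]
    rintro (h | h)
    · have h1 : p ∣ (2 * m).factorial :=
        h.trans ⟨m.factorial * (2 * m - m).factorial, by
          rw [← Nat.choose_mul_factorial_mul_factorial (show m ≤ 2 * m by omega), mul_assoc]⟩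
      have := (hp.dvd_factorial).1 h1
      omega
    · exact ih l hl h

/-! ### The Jacobi sum over the Gaussian integers -/

section Norm

variable {F : Type} [Field F] [Fintype F]

omit [Fintype F] in
lemma ringHomComp_star {χ : MulChar F GaussianInt} (h : IsQuarticChar χ) :
    χ.ringHomComp (starRingEnd GaussianInt) = χ ^ 3 := by
  ext1 u
  rw [MulChar.pow_apply_coe, MulChar.ringHomComp_apply]
  have h4 := h.pow_four u.ne_zero
  have hu : IsUnit (χ (u : F)) := u.isUnit.map χ
  have hn : (χ (u : F)).norm = 1 := (Zsqrtd.norm_eq_one_iff' (by norm_num) _).2 hu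
  have hz : (1 : GaussianInt) = χ u * star (χ u) := by
    rw [← Zsqrtd.norm_eq_mul_conj, hn]; rfl
  rw [starRingEnd_apply]
  linear_combination star (χ (u : F)) * h4 * (-1) - (χ (u : F)) ^ 3 * hz

lemma jacobiSum_cube {χ : MulChar F GaussianInt} (h : IsQuarticChar χ) :
    jacobiSum (χ ^ 3) (χ ^ 2) = star (jacobiSum χ (χ ^ 2)) := by
  rw [← starRingEnd_apply, ← jacobiSum_ringHomComp, ← MulChar.ringHomComp_pow,
    ringHomComp_star h, h.cube_sq]

lemma jacobiSum_mul_star {χ : MulChar F GaussianInt} (h : IsQuarticChar χ)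
    (hq : Fintype.card F % 8 = 5) :
    jacobiSum χ (χ ^ 2) * star (jacobiSum χ (χ ^ 2)) = Fintype.card F := by
  classical
  have hinj := GaussianInt.toComplex_injective
  apply hinj
  have hs : star (jacobiSum χ (χ ^ 2)) = jacobiSum χ⁻¹ (χ ^ 2)⁻¹ := by
    rw [← jacobiSum_cube h, h.sq_inv, h.cube_eq_inv]
  have hc : ringChar ℂ ≠ ringChar F := by
    rw [ringChar.eq_zero]
    exact (CharP.ringChar_ne_zero_of_finite F).symm
  rw [hs, map_mul, ← jacobiSum_ringHomComp, ← jacobiSum_ringHomComp, ← MulChar.ringHomComp_inv,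
    ← MulChar.ringHomComp_inv, map_natCast]
  apply jacobiSum_mul_jacobiSum_inv hc
  · exact (MulChar.ringHomComp_ne_one_iff hinj).2 (h.ne_one hq)
  · exact (MulChar.ringHomComp_ne_one_iff hinj).2 (h.sq_ne_one hq)
  · rw [← MulChar.ringHomComp_mul, ← pow_succ']
    exact (MulChar.ringHomComp_ne_one_iff hinj).2 (h.cube.ne_one hq)

open Classical in
/-- Here `a + b i` is the Jacobi sum `J(χ, χ²)` of a quartic character with values in `ℤ[i]`. -/
lemma exists_count (hq : Fintype.card F % 8 = 5) : ∃ a b : ℤ,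
    (Fintype.card F : ℤ) = a ^ 2 + b ^ 2 ∧
    (16 * #{t : F | Quartic t ∧ Quartic (1 - t)} : ℤ) = Fintype.card F - 7 + 2 * a := by
  obtain ⟨χ, h⟩ := exists_isQuarticChar_gaussianInt hq
  refine ⟨(jacobiSum χ (χ ^ 2)).re, (jacobiSum χ (χ ^ 2)).im, ?_, ?_⟩
  · have := congrArg Zsqrtd.re (jacobiSum_mul_star h hq)
    simp [Zsqrtd.re_mul] at this
    linear_combination -this
  · have h1 := h.sixteen_mul_card hq
    rw [jacobiSum_cube h] at h1
    have h2 := congrArg Zsqrtd.re h1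
    simp [Zsqrtd.re_mul] at h2
    linear_combination h2

open Classical in
lemma four_mul_card_quartic (hq : Fintype.card F % 8 = 5) :
    (4 * #{t : F | Quartic t} : ℤ) = Fintype.card F - 1 := by
  obtain ⟨χ, h⟩ := exists_isQuarticChar_gaussianInt hq
  have e : (4 * #{t : F | Quartic t} : GaussianInt) = Fintype.card F - 1 := by
    have := Finset.sum_congr rfl fun (t : F) (_ : t ∈ univ) => h.sum_powers t
    rw [← sum_filter, sum_const, nsmul_eq_mul, sum_add_distrib, sum_add_distrib, sum_add_distrib,
      MulChar.sum_eq_zero_of_ne_one (h.ne_one hq), MulChar.sum_eq_zero_of_ne_one (h.sq_ne_one hq),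
      MulChar.sum_eq_zero_of_ne_one (h.cube.ne_one hq), MulChar.sum_one_eq_card_units,
      Fintype.card_units, Nat.cast_sub Fintype.card_pos] at this
    rw [mul_comm, ← this]; push_cast; ring
  have h2 := congrArg Zsqrtd.re e
  simpa using h2

end Norm

/-! ### Uniqueness of the representation as a sum of two squares -/

/-- The representation `p ^ r = a ^ 2 + b ^ 2` with `p ∤ a` is unique up to signs and order; the
congruence `a ≡ 1 (mod 4)` then pins down `a`. -/
lemma eq_of_sum_sq {p r : ℕ} {a b x y : ℤ} (hp : p.Prime) (hp2 : p % 2 = 1)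
    (h1 : (p : ℤ) ^ r = a ^ 2 + b ^ 2) (h2 : (p : ℤ) ^ r = x ^ 2 + y ^ 2)
    (ha : a % 4 = 1) (hx : x % 4 = 1) (hpa : ¬ (p : ℤ) ∣ a) (hpx : ¬ (p : ℤ) ∣ x) : a = x := by
  have hpz : Prime (p : ℤ) := Nat.prime_iff_prime_int.1 hp
  have hodd : Odd ((p : ℤ) ^ r) := Odd.pow (by exact_mod_cast Nat.odd_iff.2 hp2)
  have hb : Even b := by
    have hao : Odd (a ^ 2) := Odd.pow (Int.odd_iff.2 (by omega))
    have : Even (b ^ 2) := by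
      rw [show b ^ 2 = (p : ℤ) ^ r - a ^ 2 by rw [h1]; ring]
      exact hodd.sub_odd hao
    exact (Int.even_pow.1 this).1
  have hax : Odd (a * x) := Int.odd_mul.2 ⟨Int.odd_iff.2 (by omega), Int.odd_iff.2 (by omega)⟩
  have hq0 : (p : ℤ) ^ r ≠ 0 := pow_ne_zero _ hpz.ne_zero
  -- If `q` divides `a x - b y`, then `(a x - b y) ^ 2 + (a y + b x) ^ 2 = q ^ 2` forces
  -- `a y + b x = 0`, because `a x - b y` is odd.
  have key : ∀ y : ℤ, (p : ℤ) ^ r = x ^ 2 + y ^ 2 → (p : ℤ) ^ r ∣ a * x - b * y →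
      a = x := by
    intro y h2 ⟨c, hc⟩
    have hc0 : c ≠ 0 := by
      rintro rfl
      have : Odd (a * x - b * y) := hax.sub_even (hb.mul_right y)
      rw [hc, mul_zero] at this
      exact absurd this (by decide)
    have hsum : (a * x - b * y) ^ 2 + (a * y + b * x) ^ 2 = ((p : ℤ) ^ r) ^ 2 := by
      rw [sq ((p : ℤ) ^ r)]
      nth_rewrite 1 [h1]
      rw [h2]; ring
    have hq2 : 0 < ((p : ℤ) ^ r) ^ 2 := by positivity
    have hc1 : 1 ≤ c ^ 2 := by
      have : 0 < c ^ 2 := by positivity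
      omega
    have hle : c ^ 2 ≤ 1 := by
      rw [hc] at hsum
      nlinarith [sq_nonneg (a * y + b * x)]
    have hcc : c ^ 2 = 1 := le_antisymm hle hc1
    have hz : a * y + b * x = 0 := by
      rw [hc, mul_pow, hcc] at hsum
      have : (a * y + b * x) ^ 2 = 0 := by linarith
      exact pow_eq_zero_iff (two_ne_zero) |>.1 this
    have hfin : (p : ℤ) ^ r * a = (p : ℤ) ^ r * (c * x) := by
      linear_combination a * h2 + y * hz + x * hc
    have hacx := mul_left_cancel₀ hq0 hfin
    rcases mul_self_eq_one_iff.1 ((sq c).symm.trans hcc) with rfl | rfl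
    · omega
    · omega
  have hprod : (p : ℤ) ^ r ∣ (a * x - b * y) * (a * x + b * y) :=
    ⟨a ^ 2 + x ^ 2 - (p : ℤ) ^ r, by
      linear_combination ((p : ℤ) ^ r - x ^ 2) * h1 + b ^ 2 * h2⟩
  by_cases hd : (p : ℤ) ∣ a * x - b * y
  · have hd2 : ¬ (p : ℤ) ∣ a * x + b * y := by
      intro hd2
      have h3 : (p : ℤ) ∣ 2 * (a * x) := by
        have := dvd_add hd hd2
        rwa [show a * x - b * y + (a * x + b * y) = 2 * (a * x) by ring] at this
      rcases hpz.dvd_or_dvd h3 with h | h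
      · have := Nat.le_of_dvd (by norm_num) (by exact_mod_cast h : p ∣ 2)
        have := hp.two_le
        omega
      · exact (hpz.dvd_or_dvd h).elim hpa hpx
    exact key y h2 (hpz.pow_dvd_of_dvd_mul_right r hd2 hprod)
  · refine key (-y) (by rw [h2]; ring) ?_
    have := hpz.pow_dvd_of_dvd_mul_left r hd hprod
    rwa [show a * x - b * -y = a * x + b * y by ring]

lemma prime_mod_four {p r : ℕ} (h : p ^ r % 8 = 5) : p % 4 = 1 := by
  have h2 : p % 2 = 1 := by
    by_contra h2
    have he : Even p := Nat.even_iff.2 (by omega)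
    rcases Nat.eq_zero_or_pos r with rfl | hr
    · simp at h
    · have := Nat.even_iff.1 (he.pow_of_ne_zero hr.ne')
      omega
  have hsq : p ^ 2 % 8 = 1 := by
    have : p % 8 = 1 ∨ p % 8 = 3 ∨ p % 8 = 5 ∨ p % 8 = 7 := by omega
    rcases this with h | h | h | h <;> simp [Nat.pow_mod, h]
  rcases Nat.even_or_odd' r with ⟨s, rfl | rfl⟩
  · rw [pow_mul, Nat.pow_mod, hsq] at h
    simp at h
  · rw [pow_succ, pow_mul, Nat.mul_mod, Nat.pow_mod, hsq] at h
    simp at h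
    omega

open Classical in
lemma sixteen_mul_card_eq {F : Type} [Field F] [Fintype F] {p r : ℕ} (hp : p.Prime)
    (hcard : Fintype.card F = p ^ r) (hq : Fintype.card F % 8 = 5) {x y : ℤ}
    (hxy : (p : ℤ) ^ r = x ^ 2 + y ^ 2) (hx : x % 4 = 1) (hpx : ¬ (p : ℤ) ∣ x) :
    (16 * #{t : F | Quartic t ∧ Quartic (1 - t)} : ℤ) = Fintype.card F - 7 + 2 * x := by
  obtain ⟨a, b, hab, hN⟩ := exists_count (F := F) hq
  have hp4 : p % 4 = 1 := prime_mod_four (hcard ▸ hq)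
  have hcardz : (Fintype.card F : ℤ) = (p : ℤ) ^ r := by rw [hcard]; push_cast; rfl
  -- The count itself gives the normalisation `2 a ≡ 7 - q (mod 16)`.
  have ha : a % 4 = 1 := by omega
  have hpF : (p : F) = 0 := by
    have h0 : (p : F) ^ r = 0 := by
      have := FiniteField.cast_card_eq_zero F
      rw [hcard] at this
      exact_mod_cast this
    exact eq_zero_of_pow_eq_zero h0
  have hpa : ¬ (p : ℤ) ∣ a := by
    rintro ⟨c, rfl⟩
    obtain ⟨k, hk⟩ : ∃ k, 4 * k + 1 = Fintype.card F := ⟨Fintype.card F / 4, by omega⟩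
    have hk0 : k ≠ 0 := by omega
    have h1 := (isQuarticChar_powChar hk0 hk).sixteen_mul_card hq
    rw [jacobiSum_powChar hk0 hk] at h1
    have h2 := congrArg (Int.cast : ℤ → F) hN
    push_cast at h2
    have h3 : (-1 : F) ^ k * ((2 * k).choose k : F) = 0 := by
      linear_combination h1 - h2 - 2 * c * hpF
    have h4 : ((2 * k).choose k : F) = 0 :=
      (mul_eq_zero.1 h3).resolve_left (pow_ne_zero _ (by simp))
    have : CharP F p := by
      have := Fact.mk hp
      exact (CharP.charP_iff_prime_eq_zero hp).2 hpF
    exact not_dvd_choose hp (m := p / 4) (by omega) r k (hk.trans hcard)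
      ((CharP.cast_eq_zero_iff F p _).1 h4)
  rw [hN, eq_of_sum_sq hp (by omega) (hcardz ▸ hab) hxy ha hx hpa hpx]

/-! ### Transitive triangles -/

/-- A vertex set spans at most one transitive triangle of an antisymmetric relation. -/
lemma triple_unique {V : Type} [DecidableEq V] {E : V → V → Prop} (hE : ∀ a b, E a b → ¬ E b a)
    {a b c a' b' c' : V} (h1 : E a b) (h2 : E b c) (h3 : E a c) (h1' : E a' b') (h2' : E b' c')
    (h3' : E a' c') (h : ({a, b, c} : Finset V) = {a', b', c'}) : a = a' ∧ b = b' ∧ c = c' := by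
  have hirr : ∀ v, ¬ E v v := fun v hv => hE v v hv hv
  have ma : a ∈ ({a', b', c'} : Finset V) := h ▸ by simp
  have mb : b ∈ ({a', b', c'} : Finset V) := h ▸ by simp
  have mc : c ∈ ({a', b', c'} : Finset V) := h ▸ by simp
  simp only [mem_insert, mem_singleton] at ma mb mc
  rcases ma with rfl | rfl | rfl <;> rcases mb with rfl | rfl | rfl <;>
    rcases mc with rfl | rfl | rfl <;> simp_all

lemma Quartic.mul {F : Type} [Field F] {s t : F} (hs : Quartic s) (ht : Quartic t) :
    Quartic (s * t) := by
  obtain ⟨c, hc, rfl⟩ := hs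
  obtain ⟨d, hd, rfl⟩ := ht
  exact ⟨c * d, mul_ne_zero hc hd, by ring⟩

lemma Quartic.div {F : Type} [Field F] {s t : F} (hs : Quartic s) (ht : Quartic t) :
    Quartic (s / t) := by
  obtain ⟨c, hc, rfl⟩ := hs
  obtain ⟨d, hd, rfl⟩ := ht
  exact ⟨c / d, div_ne_zero hc hd, by ring⟩

open Classical in
/-- A transitive triangle `a → b → c` is determined by its source `a`, the fourth power
`d = c - a`, and the ratio `t = (b - a) / (c - a)`, for which `t` and `1 - t` are fourth powers. -/
lemma transK_three_s6 {F : Type} [Field F] [Fintype F] [DecidableEq F]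
    (hq : Fintype.card F % 8 = 5) :
    transK (fun a b : F => Quartic (b - a)) 3 =
      Fintype.card F * (#{t : F | Quartic t} * #{t : F | Quartic t ∧ Quartic (1 - t)}) := by
  set D : Finset F := {t : F | Quartic t}
  set T : Finset F := {t : F | Quartic t ∧ Quartic (1 - t)}
  have hE : ∀ a b : F, Quartic (b - a) → ¬ Quartic (a - b) := fun a b h1 h2 => by
    have h3 := h1.div h2
    rw [show (b - a) / (a - b) = -1 by rw [← neg_sub, neg_div, div_self h2.ne_zero]] at h3
    exact not_quartic_neg_one hq h3
  have hedges : ∀ v ∈ (univ : Finset F) ×ˢ D ×ˢ T,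
      Quartic (v.1 + v.2.2 * v.2.1 - v.1) ∧ Quartic (v.1 + v.2.1 - (v.1 + v.2.2 * v.2.1)) ∧
        Quartic (v.1 + v.2.1 - v.1) := by
    rintro ⟨a, d, t⟩ hv
    simp only [mem_product, mem_univ, true_and, D, T, mem_filter] at hv
    obtain ⟨hd, ht, ht'⟩ := hv
    refine ⟨?_, ?_, ?_⟩
    · rw [add_sub_cancel_left]; exact ht.mul hd
    · rw [show a + d - (a + t * d) = (1 - t) * d by ring]; exact ht'.mul hd
    · rw [add_sub_cancel_left]; exact hd
  let f : F × F × F → Finset F := fun v => {v.1, v.1 + v.2.2 * v.2.1, v.1 + v.2.1}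
  have hset : {s : Finset F | ∃ f : Fin 3 → F, Function.Injective f ∧
      s = Finset.image f Finset.univ ∧ ∀ i j : Fin 3, i < j → Quartic (f j - f i)} =
      (((univ : Finset F) ×ˢ D ×ˢ T).image f : Finset (Finset F)) := by
    ext s
    simp only [Set.mem_ofPred_eq, coe_image, Set.mem_image, mem_coe]
    constructor
    · rintro ⟨g, -, rfl, hg⟩
      have h01 := hg 0 1 (by decide)
      have h12 := hg 1 2 (by decide)
      have h02 := hg 0 2 (by decide)
      refine ⟨(g 0, g 2 - g 0, (g 1 - g 0) / (g 2 - g 0)), ?_, ?_⟩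
      · simp only [mem_product, mem_univ, true_and, D, T, mem_filter]
        refine ⟨h02, h01.div h02, ?_⟩
        rw [one_sub_div h02.ne_zero, sub_sub_sub_cancel_right]
        exact h12.div h02
      · simp only [f]
        rw [div_mul_cancel₀ _ h02.ne_zero, add_sub_cancel, add_sub_cancel]
        ext z
        simp [Fin.exists_fin_succ, eq_comm]
    · rintro ⟨v, hv, rfl⟩
      obtain ⟨h01, h12, h02⟩ := hedges v hv
      have hne : ∀ {a b : F}, Quartic (b - a) → a ≠ b := fun h e => h.ne_zero (by rw [e, sub_self])
      refine ⟨![v.1, v.1 + v.2.2 * v.2.1, v.1 + v.2.1], ?_, ?_, ?_⟩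
      · have n1 := hne h01
        have n2 := hne h12
        have n3 := hne h02
        intro i j hij
        fin_cases i <;> fin_cases j <;>
          first | rfl | exact absurd hij n1 | exact absurd hij n2 | exact absurd hij n3 |
            exact absurd hij.symm n1 | exact absurd hij.symm n2 | exact absurd hij.symm n3
      · ext z
        simp [f, Fin.exists_fin_succ, eq_comm]
      · intro i j hij
        fin_cases i <;> fin_cases j <;>
          first | exact absurd hij (by decide) | exact h01 | exact h12 | exact h02
  have hinj : Set.InjOn f ((univ : Finset F) ×ˢ D ×ˢ T : Finset (F × F × F)) := by
    intro v hv w hw h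
    obtain ⟨v1, v2, v3⟩ := hedges v hv
    obtain ⟨w1, w2, w3⟩ := hedges w hw
    obtain ⟨e1, e2, e3⟩ := triple_unique (E := fun a b : F => Quartic (b - a)) hE
      v1 v2 v3 w1 w2 w3 h
    rw [add_sub_cancel_left] at w3
    have e4 : v.2.1 = w.2.1 := by rw [e1] at e3; exact add_left_cancel e3
    have e5 : v.2.2 = w.2.2 := by
      rw [e1, e4] at e2
      exact mul_right_cancel₀ w3.ne_zero (add_left_cancel e2)
    exact Prod.ext e1 (Prod.ext e4 e5)
  rw [transK, hset, Set.ncard_coe_finset, card_image_of_injOn hinj, card_product, card_product,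
    card_univ]

theorem stmt_6 {F : Type} [Field F] [Fintype F] [DecidableEq F] (p r q : ℕ)
    (hp : p.Prime) (hq : q = p ^ r) (hcard : Fintype.card F = q) (hmod : q % 8 = 5)
    (x y : ℤ) (hxy : (q : ℤ) = x ^ 2 + y ^ 2) (hx : x % 4 = 1) (hpx : ¬ (p : ℤ) ∣ x) :
    (2 ^ 6 * (transK (fun a b : F => ∃ c : F, c ≠ 0 ∧ b - a = c ^ 4) 3) : ℤ) =
      (q : ℤ) * ((q : ℤ) - 1) * ((q : ℤ) + 2 * x - 7) := by
  classical
  subst hcard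
  have hK := transK_three_s6 (F := F) hmod
  have hN := sixteen_mul_card_eq hp hq hmod (x := x) (y := y)
    (by rw [← hxy, hq]; push_cast; rfl) hx hpx
  have hD := four_mul_card_quartic (F := F) hmod
  have hK' : transK (fun a b : F => ∃ c : F, c ≠ 0 ∧ b - a = c ^ 4) 3 =
      transK (fun a b : F => Quartic (b - a)) 3 := by
    unfold transK Quartic
    congr!
  rw [hK', hK]
  push_cast
  linear_combination (16 * (Fintype.card F : ℤ) *
    #{t : F | Quartic t ∧ Quartic (1 - t)}) * hD +
    (Fintype.card F : ℤ) * ((Fintype.card F : ℤ) - 1) * hN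
end

section
/- Let k ≥ 2 be an even integer, q a prime power with q ≡ k+1 (mod 2k), and χ_k a multiplicative character of F_q of order k. Then Σ_{s=0}^{k−1} Σ_{t=0}^{k−1} Σ_{v=0}^{k−1} (−1)^{s+t} J(χ_k^s, χ_k^t) · J(χ_k^{−s}, χ_k^v) = S⁻_k(q) − R⁻_k(q) − 3·R_k(q) + q^2 − 2kq + 3(k−1). -/
/-!
The proof is a computation with functions on the cyclic group `ℤ/k`. Put `J s t = J(χ^s, χ^t)` and
`e s = χ^s(-1)`. The congruence on `q` says that `(q - 1)/k` is odd, hence `χ(-1) = -1` and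
`e s = (-1)^s` (`apply_neg_one`). The Jacobi sums satisfy

* `J 0 0 = q - 2`, `J 0 t = -1` for `t ≠ 0`, and `J s (-s) = -e s` for `s ≠ 0`;
* `J s t = e s * J s (-s-t)` (`jac_reflect`), from the substitution `a ↦ a / (a - 1)`;
* `J s t * J (-s) (-t) = q` if none of `s`, `t`, `s + t` vanishes.

`triple_sum` derives the identity from these facts alone. The `s = 0` part of the triple sum is
`(q - 1) * (q - k - 1)`. For `s ≠ 0` one splits off `t = 0, -s` and `v = 0, s`, so that the `s` part
is `e s * (A s - 2) * (B s - 1 - e s)` with `A`, `B` the remaining nondegenerate sums. In the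
expansion, the reflection formula turns the sums of `A s` and of `e s * B s` into `R`, the sum of
`e s * A s` is `R⁻`, and the sum of `e s * A s * B s` is `S⁻` plus the terms with `v = -t`,
each of which is `q * e (s + t)`.
-/

/-- Jacobi sum `J(A,B) = ∑_{a ∈ F} A(a) B(1-a)`. -/
noncomputable def jac {F : Type} [Field F] [Fintype F] (A B : MulChar F ℂ) : ℂ :=
  ∑ a : F, A a * B (1 - a)

/-- `R_k(q) = ∑_{1 ≤ s,t ≤ k-1, s+t ≢ 0 (k)} J(χ^s, χ^t)`. -/
noncomputable def Rk {F : Type} [Field F] [Fintype F] (k : ℕ) (χ : MulChar F ℂ) : ℂ :=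
  ∑ s ∈ Finset.Icc 1 (k - 1), ∑ t ∈ Finset.Icc 1 (k - 1),
    if (s : ZMod k) + t ≠ 0 then jac (χ ^ s) (χ ^ t) else 0

/-- `R⁻_k(q)`: as `R_k(q)` but with each term multiplied by `(-1)^{s+t}`. -/
noncomputable def Rmk {F : Type} [Field F] [Fintype F] (k : ℕ) (χ : MulChar F ℂ) : ℂ :=
  ∑ s ∈ Finset.Icc 1 (k - 1), ∑ t ∈ Finset.Icc 1 (k - 1),
    if (s : ZMod k) + t ≠ 0 then (-1 : ℂ) ^ (s + t) * jac (χ ^ s) (χ ^ t) else 0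

/-- `S_k(q) = ∑_{1 ≤ s,t,v ≤ k-1, s+t,v+t,v-s ≢ 0 (k)} J(χ^s, χ^t) J(χ^{-s}, χ^v)`. -/
noncomputable def Sk {F : Type} [Field F] [Fintype F] (k : ℕ) (χ : MulChar F ℂ) : ℂ :=
  ∑ s ∈ Finset.Icc 1 (k - 1), ∑ t ∈ Finset.Icc 1 (k - 1), ∑ v ∈ Finset.Icc 1 (k - 1),
    if (s : ZMod k) + t ≠ 0 ∧ (v : ZMod k) + t ≠ 0 ∧ (v : ZMod k) - s ≠ 0 then
      jac (χ ^ s) (χ ^ t) * jac (χ⁻¹ ^ s) (χ ^ v) else 0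

/-- `S⁻_k(q)`: as `S_k(q)` but with each term multiplied by `(-1)^{s+t}`. -/
noncomputable def Smk {F : Type} [Field F] [Fintype F] (k : ℕ) (χ : MulChar F ℂ) : ℂ :=
  ∑ s ∈ Finset.Icc 1 (k - 1), ∑ t ∈ Finset.Icc 1 (k - 1), ∑ v ∈ Finset.Icc 1 (k - 1),
    if (s : ZMod k) + t ≠ 0 ∧ (v : ZMod k) + t ≠ 0 ∧ (v : ZMod k) - s ≠ 0 then
      (-1 : ℂ) ^ (s + t) * (jac (χ ^ s) (χ ^ t) * jac (χ⁻¹ ^ s) (χ ^ v)) else 0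

/-! ### The identity on an abstract finite group -/

section Abstract

open Finset

variable {G : Type} [AddCommGroup G] [Fintype G] [DecidableEq G]

/-- Splitting off the two degenerate indices `0` and `a` of a sum. -/
lemma sum_split_two (f : G → ℂ) {a : G} (ha : a ≠ 0) :
    ∑ t, f t = f 0 + f a + ∑ t ∈ univ.erase 0, if t - a ≠ 0 then f t else 0 := by
  rw [← add_sum_erase univ f (mem_univ 0), ← sum_filter,
    ← add_sum_erase (univ.erase 0) f (mem_erase.2 ⟨ha, mem_univ a⟩), add_assoc]
  congr 3
  ext t
  simp [sub_eq_zero, and_comm]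

/-- The involution `t ↦ -s - t` permutes the indices `t` with `t ≠ 0` and `s + t ≠ 0`. -/
lemma sum_reflect (f : G → ℂ) (s : G) :
    (∑ t ∈ univ.erase 0, if s + t ≠ 0 then f (-s - t) else 0) =
      ∑ t ∈ univ.erase 0, if s + t ≠ 0 then f t else 0 := by
  rw [← sum_filter, ← sum_filter]
  have h (t : G) (ht : t ∈ (univ.erase 0).filter (fun t => s + t ≠ 0)) :
      -s - t ∈ (univ.erase 0).filter (fun t => s + t ≠ 0) := by
    simp only [mem_filter, mem_erase, mem_univ, and_true] at ht ⊢
    refine ⟨fun h => ht.2 ?_, fun h => ht.1 ?_⟩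
    · rw [← neg_eq_zero, ← h]; abel
    · rw [← neg_eq_zero, ← h]; abel
  exact sum_nbij' (fun t => -s - t) (fun t => -s - t) h h (by simp) (by simp) (by simp)

lemma sum_erase_neg (f : G → ℂ) :
    ∑ s ∈ univ.erase 0, f (-s) = ∑ s ∈ univ.erase 0, f s :=
  sum_nbij' (fun s => -s) (fun s => -s) (by simp) (by simp) (by simp) (by simp) (by simp)

/-- The theorem for a function `J` on pairs of elements of a finite group and a sign character `e`
which satisfy the standard relations between Jacobi sums. -/
lemma triple_sum (e : G → ℂ) (J : G → G → ℂ) (q : ℂ)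
    (he_add : ∀ s t, e (s + t) = e s * e t) (he_sq : ∀ s, e s * e s = 1) (he_zero : e 0 = 1)
    (he_sum : ∑ s, e s = 0)
    (hJ_zero : J 0 0 = q - 2) (hJ_left : ∀ t, t ≠ 0 → J 0 t = -1)
    (hJ_symm : ∀ s t, J s t = J t s)
    (hJ_neg : ∀ s, s ≠ 0 → J s (-s) = -e s)
    (hJ_refl : ∀ s t, J s t = e s * J s (-s - t))
    (hJ_mul : ∀ s t, s ≠ 0 → t ≠ 0 → s + t ≠ 0 → J s t * J (-s) (-t) = q) :
    ∑ s, ∑ t, ∑ v, e (s + t) * (J s t * J (-s) v) =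
      (∑ s ∈ univ.erase 0, ∑ t ∈ univ.erase 0, ∑ v ∈ univ.erase 0,
        if s + t ≠ 0 ∧ v + t ≠ 0 ∧ v - s ≠ 0 then e (s + t) * (J s t * J (-s) v) else 0)
      - (∑ s ∈ univ.erase 0, ∑ t ∈ univ.erase 0, if s + t ≠ 0 then e (s + t) * J s t else 0)
      - 3 * (∑ s ∈ univ.erase 0, ∑ t ∈ univ.erase 0, if s + t ≠ 0 then J s t else 0)
      + q ^ 2 - 2 * (Fintype.card G : ℂ) * q + 3 * ((Fintype.card G : ℂ) - 1) := by
  set E : Finset G := univ.erase 0 with hE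
  have hmem (s : G) : s ∈ E ↔ s ≠ 0 := by simp [hE]
  have he_neg (s : G) : e (-s) = e s := by
    have h1 : e (-s) * e s = 1 := by rw [← he_add, neg_add_cancel, he_zero]
    calc e (-s) = e (-s) * e s * e s := by rw [mul_assoc, he_sq, mul_one]
      _ = e s := by rw [h1, one_mul]
  have hcard : (E.card : ℂ) = (Fintype.card G : ℂ) - 1 := by
    rw [hE, card_erase_of_mem (mem_univ _), card_univ, Nat.cast_pred Fintype.card_pos]
  have heE : ∑ s ∈ E, e s = -1 := by
    have := add_sum_erase univ e (mem_univ 0)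
    rw [he_sum, he_zero] at this
    linear_combination this
  set A : G → ℂ := fun s => ∑ t ∈ E, if s + t ≠ 0 then e t * J s t else 0 with hA
  set B : G → ℂ := fun s => ∑ v ∈ E, if v - s ≠ 0 then J (-s) v else 0 with hB
  set R : ℂ := ∑ s ∈ E, ∑ t ∈ E, if s + t ≠ 0 then J s t else 0 with hR
  have hfact (s : G) : ∑ t, ∑ v, e (s + t) * (J s t * J (-s) v) =
      e s * (∑ t, e t * J s t) * ∑ v, J (-s) v := by
    rw [mul_assoc, sum_mul_sum, mul_sum]
    refine sum_congr rfl fun t _ => ?_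
    rw [mul_sum]
    refine sum_congr rfl fun v _ => ?_
    rw [he_add]; ring
  have hA0 : ∑ t, e t * J 0 t = q - 1 := by
    rw [← add_sum_erase univ _ (mem_univ 0), he_zero, hJ_zero,
      sum_congr rfl (fun t ht => by rw [hJ_left t ((hmem t).1 ht)] :
        ∀ t ∈ univ.erase 0, e t * J 0 t = e t * -1), ← sum_mul, ← hE, heE]
    ring
  have hB0 : ∑ v, J (-0) v = q - (Fintype.card G : ℂ) - 1 := by
    rw [neg_zero, ← add_sum_erase univ _ (mem_univ 0), hJ_zero,
      sum_congr rfl (fun t ht => hJ_left t ((hmem t).1 ht)), sum_const, nsmul_eq_mul, hcard]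
    ring
  have hA1 (s : G) (hs : s ∈ E) : ∑ t, e t * J s t = A s - 2 := by
    have hs := (hmem s).1 hs
    rw [sum_split_two _ (neg_ne_zero.2 hs), he_zero, hJ_symm s 0, hJ_left s hs, hJ_neg s hs, he_neg]
    simp only [sub_neg_eq_add, add_comm _ s]
    linear_combination -he_sq s
  have hB1 (s : G) (hs : s ∈ E) : ∑ v, J (-s) v = B s - 1 - e s := by
    have hs := (hmem s).1 hs
    have h := hJ_neg (-s) (neg_ne_zero.2 hs)
    rw [neg_neg, he_neg] at h
    rw [sum_split_two _ hs, hJ_symm (-s) 0, hJ_left _ (neg_ne_zero.2 hs), h]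
    ring
  -- The reflection formula absorbs a sign on one argument of `J`; `hAsum` and `hBsum` reduce to it.
  have hsign : ∑ s ∈ E, ∑ t ∈ E, (if s + t ≠ 0 then e s * J s t else 0) = R := by
    refine sum_congr rfl fun s _ => ?_
    rw [← sum_reflect (J s) s]
    refine sum_congr rfl fun t _ => ?_
    rw [hJ_refl s t, ← mul_assoc, he_sq, one_mul]
  have hAsum : ∑ s ∈ E, A s = R := by
    rw [← hsign, hA, sum_comm]
    refine sum_congr rfl fun s _ => sum_congr rfl fun t _ => ?_
    rw [add_comm t s, hJ_symm t s]
  have hBsum : ∑ s ∈ E, e s * B s = R := by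
    rw [← hsign, ← sum_erase_neg]
    refine sum_congr rfl fun s _ => ?_
    rw [hB, mul_sum]
    refine sum_congr rfl fun t _ => ?_
    simp only [sub_neg_eq_add, neg_neg, he_neg, add_comm t s, mul_ite, mul_zero]
  have hRm : ∑ s ∈ E, ∑ t ∈ E, (if s + t ≠ 0 then e (s + t) * J s t else 0) =
      ∑ s ∈ E, e s * A s := by
    refine sum_congr rfl fun s _ => ?_
    rw [hA, mul_sum]
    refine sum_congr rfl fun t _ => ?_
    rw [he_add, mul_ite, mul_zero, mul_assoc]
  have hdiag_sum (s : G) (hs : s ∈ E) :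
      ∑ t ∈ E, (if s + t ≠ 0 then e (s + t) * q else 0) = (-e s - 1) * q := by
    have hs := (hmem s).1 hs
    have h := sum_split_two (fun t => e (s + t)) (neg_ne_zero.2 hs)
    have h0 : ∑ t, e (s + t) = 0 := by
      simp only [he_add]; rw [← mul_sum, he_sum, mul_zero]
    simp only [sub_neg_eq_add, add_comm _ s, add_zero, add_neg_cancel, he_zero, h0] at h
    have h' : ∑ t ∈ E, (if s + t ≠ 0 then e (s + t) * q else 0) =
        (∑ t ∈ E, if s + t ≠ 0 then e (s + t) else 0) * q := by
      rw [sum_mul]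
      exact sum_congr rfl fun t _ => by rw [ite_mul, zero_mul]
    rw [h']
    linear_combination -q * h
  -- The term `v = -t`, which the condition `v + t ≠ 0` excludes, contributes `q * e (s + t)`.
  have hAB (s : G) (hs : s ∈ E) : e s * A s * B s =
      (∑ t ∈ E, ∑ v ∈ E,
        if s + t ≠ 0 ∧ v + t ≠ 0 ∧ v - s ≠ 0 then e (s + t) * (J s t * J (-s) v) else 0)
      + (-e s - 1) * q := by
    rw [← hdiag_sum s hs, ← sum_add_distrib, hA, hB, mul_assoc, sum_mul, mul_sum]
    refine sum_congr rfl fun t ht => ?_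
    by_cases hst : s + t = 0
    · simp [hst]
    have hnt : -t ∈ E := (hmem _).2 (neg_ne_zero.2 ((hmem t).1 ht))
    have hnts : -t - s ≠ 0 := fun h => hst (by rw [← neg_eq_zero, ← h]; abel)
    rw [if_pos hst, if_pos hst, mul_sum, mul_sum, ← add_sum_erase E _ hnt,
      ← add_sum_erase E (fun v => ite _ _ _) hnt, if_pos hnts, if_neg (by simp),
      zero_add, add_comm]
    congr 1
    · refine sum_congr rfl fun v hv => ?_
      have hvt : v + t ≠ 0 := fun h => (mem_erase.1 hv).1 (eq_neg_of_add_eq_zero_left h)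
      by_cases hvs : v - s = 0
      · simp [hvs]
      · rw [if_pos hvs, if_pos ⟨hst, hvt, hvs⟩, he_add]; ring
    · rw [he_add]
      linear_combination e s * e t * hJ_mul s t ((hmem s).1 hs) ((hmem t).1 ht) hst
  have hABsum := sum_congr (rfl : E = E) hAB
  rw [sum_add_distrib, ← sum_mul, sum_sub_distrib, sum_neg_distrib, heE, sum_const,
    nsmul_eq_mul, hcard] at hABsum
  have hmain : ∑ s ∈ E, ∑ t, ∑ v, e (s + t) * (J s t * J (-s) v) =
      ∑ s ∈ E, (e s * A s * B s - e s * A s - A s - 2 * (e s * B s) + 2 * e s + 2) := by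
    refine sum_congr rfl fun s hs => ?_
    rw [hfact, hA1 s hs, hB1 s hs]
    linear_combination (-A s + 2) * he_sq s
  rw [← add_sum_erase univ _ (mem_univ 0), ← hE, hmain, hfact, hA0, hB0, he_zero, hRm]
  simp only [sum_add_distrib, sum_sub_distrib, ← mul_sum]
  rw [hABsum, hAsum, hBsum, heE, sum_const, nsmul_eq_mul, hcard]
  ring

end Abstract

/-! ### Jacobi sums and the value of the character at `-1` -/

section Jacobi

variable {F : Type} [Field F] [Fintype F]

lemma jac_eq_jacobiSum (A B : MulChar F ℂ) : jac A B = jacobiSum A B := rfl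

/-- `J(A, B) = A(-1) J(A, (AB)⁻¹)`, by the substitution `a ↦ a / (a - 1)`. -/
lemma jac_reflect (A B : MulChar F ℂ) : jac A B = A (-1) * jac A (A⁻¹ * B⁻¹) := by
  have hswap (C : MulChar F ℂ) : jac A C = ∑ b : F, A (1 - b) * C b := by
    unfold jac
    rw [← (Equiv.subLeft (1 : F)).sum_comp]
    simp
  -- With `b = 1 - a` the substitution becomes `b ↦ b⁻¹`, a bijection of all of `F`.
  rw [hswap, hswap, ← Equiv.sum_comp (Equiv.inv F) (fun b => A (1 - b) * (A⁻¹ * B⁻¹) b),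
    Finset.mul_sum]
  refine Finset.sum_congr rfl fun b _ => ?_
  rcases eq_or_ne b 0 with rfl | hb
  · simp [MulChar.map_zero]
  · have h : (1 : F) - b = -1 * (1 - b⁻¹) * b := by field_simp; ring
    rw [h, map_mul, map_mul, Equiv.inv_apply, MulChar.mul_apply, MulChar.inv_apply',
      MulChar.inv_apply', inv_inv]
    ring

/-- If `χ` has even order `k` and `(q - 1)/k` is odd, then `χ(-1) = -1`: otherwise `χ ^ (k/2)`
would be trivial on the generator of the multiplicative group. -/
lemma apply_neg_one {q k : ℕ} (hk : 2 ≤ k) (hkeven : Even k) (hq : Fintype.card F = q)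
    (hmod : q % (2 * k) = k + 1) (χ : MulChar F ℂ) (hχ : orderOf χ = k) : χ (-1) = -1 := by
  classical
  obtain ⟨m, hm⟩ := hkeven
  obtain ⟨g, hg⟩ := IsCyclic.exists_generator (α := Fˣ)
  have hqd : q = k * (2 * (q / (2 * k)) + 1) + 1 := by
    have := Nat.div_add_mod q (2 * k)
    rw [hmod] at this
    linarith
  set d := q / (2 * k)
  have hordg : orderOf g = q - 1 := by
    rw [orderOf_eq_card_of_forall_mem_zpowers hg, Nat.card_eq_fintype_card, Fintype.card_units, hq]
  have hn : q - 1 = (m * (2 * d + 1)) * 2 := by rw [hqd, hm]; simp; ring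
  set n := m * (2 * d + 1)
  have hm0 : 0 < m := by omega
  have hn0 : 0 < n := by positivity
  have hgn : ((g : F)) ^ n = -1 := by
    have h1 : ((g : F) ^ n) ^ 2 = 1 := by
      rw [← pow_mul, ← hn, ← hordg, ← Units.val_pow_eq_pow_val, pow_orderOf_eq_one, Units.val_one]
    refine (sq_eq_sq_iff_eq_or_eq_neg.1 (h1.trans (one_pow 2).symm)).resolve_left ?_
    intro h
    have h2 : g ^ n = 1 := Units.ext (by simpa using h)
    have := Nat.le_of_dvd hn0 (orderOf_dvd_of_pow_eq_one h2)
    omega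
  have hχk : (χ g) ^ k = 1 := by
    rw [← MulChar.pow_apply_coe, ← hχ, pow_orderOf_eq_one, MulChar.one_apply_coe]
  have hχm : (χ g) ^ m = -1 := by
    have h1 : ((χ g) ^ m) ^ 2 = 1 := by rw [← pow_mul, mul_two, ← hm, hχk]
    refine (sq_eq_sq_iff_eq_or_eq_neg.1 (h1.trans (one_pow 2).symm)).resolve_left ?_
    intro h
    have h2 : χ ^ m = 1 := by
      rw [MulChar.eq_iff hg, MulChar.pow_apply_coe, h, MulChar.one_apply_coe]
    have := Nat.le_of_dvd hm0 (orderOf_dvd_of_pow_eq_one h2)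
    omega
  have hχn : χ ((g : F) ^ n) = -1 := by
    rw [map_pow, pow_mul, hχm, Odd.neg_one_pow ⟨d, rfl⟩]
  rwa [hgn] at hχn

end Jacobi

/-! ### Passage to sums over `ZMod k` -/

open Finset in
lemma sum_range_zmod {k : ℕ} [NeZero k] (f : ZMod k → ℂ) :
    ∑ i ∈ range k, f (i : ZMod k) = ∑ x, f x :=
  sum_nbij' (fun i => (i : ZMod k)) ZMod.val (by simp) (by simp [ZMod.val_lt])
    (fun i hi => ZMod.val_cast_of_lt (mem_range.1 hi)) (by simp) (by simp)

open Finset in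
lemma sum_Icc_zmod {k : ℕ} [NeZero k] (f : ZMod k → ℂ) :
    ∑ i ∈ Icc 1 (k - 1), f (i : ZMod k) = ∑ x ∈ univ.erase 0, f x := by
  have h := sum_range_zmod f
  have hk : range k = insert 0 (Icc 1 (k - 1)) := by
    have := NeZero.pos k
    ext i; simp; omega
  rw [hk, sum_insert (by simp), ← add_sum_erase univ f (mem_univ 0), Nat.cast_zero] at h
  exact add_left_cancel h

theorem stmt_15 {F : Type} [Field F] [Fintype F] (q k : ℕ)
    (hk : 2 ≤ k) (hkeven : Even k) (hq : Fintype.card F = q)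
    (hmod : q % (2 * k) = k + 1)
    (χ : MulChar F ℂ) (hχ : orderOf χ = k) :
    ∑ s ∈ Finset.range k, ∑ t ∈ Finset.range k, ∑ v ∈ Finset.range k,
        (-1 : ℂ) ^ (s + t) * (jac (χ ^ s) (χ ^ t) * jac (χ⁻¹ ^ s) (χ ^ v)) =
      Smk k χ - Rmk k χ - 3 * Rk k χ + (q : ℂ) ^ 2 - 2 * (k : ℂ) * (q : ℂ)
        + 3 * ((k : ℂ) - 1) := by
  classical
  have : NeZero k := ⟨by omega⟩
  have hneg := apply_neg_one hk hkeven hq hmod χ hχ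
  set C : ZMod k → MulChar F ℂ := fun x => χ ^ x.val with hC
  have hC_cast (n : ℕ) : χ ^ n = C n := by
    simp only [hC, ZMod.val_natCast]
    rw [← hχ, pow_mod_orderOf]
  have hC_zero : C 0 = 1 := by simp [hC]
  have hC_add (x y : ZMod k) : C (x + y) = C x * C y := by
    simp only [hC, ZMod.val_add, ← pow_add]
    have h := pow_mod_orderOf χ (x.val + y.val)
    rwa [hχ] at h
  have hC_neg (x : ZMod k) : C (-x) = (C x)⁻¹ :=
    eq_inv_of_mul_eq_one_left (by rw [← hC_add, neg_add_cancel, hC_zero])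
  have hC_inv (n : ℕ) : χ⁻¹ ^ n = C (-(n : ZMod k)) := by rw [hC_neg, ← hC_cast, inv_pow]
  have hC_ne (x : ZMod k) (hx : x ≠ 0) : C x ≠ 1 := fun h => by
    have h1 := orderOf_dvd_of_pow_eq_one h
    rw [hχ] at h1
    exact hx ((ZMod.val_eq_zero x).1 (Nat.eq_zero_of_dvd_of_lt h1 (ZMod.val_lt x)))
  set e : ZMod k → ℂ := fun x => C x (-1) with he
  have he_add (x y : ZMod k) : e (x + y) = e x * e y := by
    simp only [he, hC_add, MulChar.mul_apply]
  have he_pow (n : ℕ) : (-1 : ℂ) ^ n = e n := by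
    have h := MulChar.pow_apply_coe χ n (-1)
    rw [Units.val_neg, Units.val_one, hneg, hC_cast] at h
    exact h.symm
  have he_sum : ∑ x, e x = 0 := by
    have h := Equiv.sum_comp (Equiv.addRight (1 : ZMod k)) e
    have h1 : e 1 = -1 := by simpa using (he_pow 1).symm
    simp only [Equiv.coe_addRight, he_add, h1, mul_neg_one, Finset.sum_neg_distrib] at h
    linear_combination -h / 2
  have hring : ringChar ℂ ≠ ringChar F := by
    rw [ringChar.eq_zero]
    exact (CharP.ringChar_ne_zero_of_finite F).symm
  have key := triple_sum e (fun x y => jac (C x) (C y)) (q : ℂ) he_add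
    (fun s => by simp only [he]; rw [← map_mul]; simp)
    (by simp [he, hC_zero, MulChar.one_apply]) he_sum
    (by simp only [hC_zero, jac_eq_jacobiSum, jacobiSum_one_one, hq])
    (fun t ht => by
      simp only [hC_zero, jac_eq_jacobiSum]; exact jacobiSum_one_nontrivial (hC_ne t ht))
    (fun s t => jacobiSum_comm _ _)
    (fun s hs => by
      simp only [hC_neg, jac_eq_jacobiSum]; exact jacobiSum_nontrivial_inv (hC_ne s hs))
    (fun s t => by
      simp only [sub_eq_add_neg, hC_add, hC_neg]; exact jac_reflect _ _)
    (fun s t hs ht hst => by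
      simp only [hC_neg, jac_eq_jacobiSum]
      rw [jacobiSum_mul_jacobiSum_inv hring (hC_ne s hs) (hC_ne t ht)
        (by rw [← hC_add]; exact hC_ne _ hst), hq])
  rw [ZMod.card] at key
  simp only [Smk, Rmk, Rk, he_pow, hC_inv, hC_cast, Nat.cast_add]
  simp only [← sum_Icc_zmod, ← sum_range_zmod] at key
  exact key
end
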